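/- In the bounded-degree uniform attachment process with m ≥ 2, fix a cycle length ℓ and a depth k, and let U_0 be the complete max-admissible unicyclic graph of depth k containing an ℓ-cycle (all of whose non-leaf vertices have degree d). Then for every n_0, P( N_{U_0}(n) > n_0 ) → 1 as n → ∞. -/

import Mathlib

open MeasureTheory ProbabilityTheory Filter Topology
open scoped ENNReal

/-- The degree of a vertex in a simple graph on `ℕ` (the number of its neighbours). -/
noncomputable def graphDeg (g : SimpleGraph ℕ) (v : ℕ) : ℕ := (g.neighborSet v).ncard

/-- The complete graph on the vertex set `[m] = {1,…,m}`, viewed as a simple graph on `ℕ`. -/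
def initGraph (m : ℕ) : SimpleGraph ℕ :=
  SimpleGraph.fromRel (fun a b => a ∈ Finset.Icc 1 m ∧ b ∈ Finset.Icc 1 m)

/-- The graph obtained from `g` by joining the (new) vertex `v` to every vertex of `S`. -/
def attachStep (g : SimpleGraph ℕ) (v : ℕ) (S : Finset ℕ) : SimpleGraph ℕ :=
  g ⊔ SimpleGraph.fromRel (fun a b => a = v ∧ b ∈ S)

/-- The set of vertices of `[n] = {1,…,n}` whose degree in `g` is strictly less than `d`. -/
noncomputable def lowDegSet (d : ℕ) (g : SimpleGraph ℕ) (n : ℕ) : Finset ℕ :=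
  (Finset.Icc 1 n).filter (fun v => graphDeg g v < d)

/-- `IsUAProcess m d μ G` says that `(G n)_{n ≥ m}` (as random graphs on `ℕ`, with `G n`
supported on the vertex set `[n] = {1,…,n}`) is the bounded-degree uniform attachment
process: `G m` is the complete graph on `[m]`, and `G (n+1)` is obtained from `G n` by
joining the new vertex `n+1` to a uniformly chosen `m`-element subset of the set of
vertices of `G n` of degree less than `d`, conditionally on `G n` and independently of
the past (note that `G n` determines the whole past of the process). -/
def IsUAProcess (m d : ℕ) {Ω : Type*} [MeasurableSpace Ω] (μ : Measure Ω)
    (G : ℕ → Ω → SimpleGraph ℕ) : Prop :=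
  (∀ n g, MeasurableSet {ω | G n ω = g}) ∧
  (∀ ω, G m ω = initGraph m) ∧
  (∀ n, m ≤ n → ∀ g : SimpleGraph ℕ, ∀ S : Finset ℕ,
    S ⊆ lowDegSet d g n → S.card = m →
    μ ({ω | G (n + 1) ω = attachStep g (n + 1) S} ∩ {ω | G n ω = g})
      = μ {ω | G n ω = g} / (((lowDegSet d g n).card.choose m : ℝ≥0∞)))

/-- The graphs on `ℕ` reachable by the bounded-degree uniform attachment process at time
`n`. -/
inductive UAReachable (m d : ℕ) : ℕ → SimpleGraph ℕ → Prop
  | init : UAReachable m d m (initGraph m)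
  | step {n : ℕ} {g : SimpleGraph ℕ} {S : Finset ℕ} :
      m ≤ n → UAReachable m d n g → S ⊆ lowDegSet d g n → S.card = m →
      UAReachable m d (n + 1) (attachStep g (n + 1) S)

/-- A graph is unicyclic if it is connected and contains exactly one cycle; for a finite
graph this means connected with as many edges as vertices. -/
def IsUnicyclic {t : ℕ} (U : SimpleGraph (Fin t)) : Prop :=
  U.Connected ∧ U.edgeSet.ncard = t

/-- The set of vertices lying on some cycle of `U` (in a unicyclic graph, the vertex set of
its unique cycle). -/
def cycleVerts {V : Type*} (U : SimpleGraph V) : Set V :=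
  {v : V | ∃ c : U.Walk v v, c.IsCycle}

/-- `U` contains a cycle of length `ℓ`. -/
def HasCycleOfLength {V : Type*} (U : SimpleGraph V) (ℓ : ℕ) : Prop :=
  ∃ v : V, ∃ c : U.Walk v v, c.IsCycle ∧ c.length = ℓ

/-- A unicyclic graph has depth `k` if the disjoint trees growing from its cycle all have
depth exactly `k`: every vertex is at distance at most `k` from the cycle, and from each
cycle vertex `v` there is a vertex `w` of the tree growing from `v` (i.e. whose nearest
cycle vertex is `v`) at distance exactly `k` from `v`. -/
def UnicyclicDepth {V : Type*} (U : SimpleGraph V) (k : ℕ) : Prop :=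
  (∀ w : V, ∃ v ∈ cycleVerts U, U.dist v w ≤ k) ∧
  (∀ v ∈ cycleVerts U, ∃ w : V, U.dist v w = k ∧
    ∀ u ∈ cycleVerts U, U.dist v w ≤ U.dist u w)

/-- A unicyclic graph is complete (w.r.t. the degree bound `d`) if all its non-leaf vertices
(vertices of degree at least `2`) have degree `d`. -/
def UnicyclicComplete {V : Type*} (U : SimpleGraph V) (d : ℕ) : Prop :=
  ∀ v : V, 2 ≤ (U.neighborSet v).ncard → (U.neighborSet v).ncard = d

/-- `H` is a maximal unicyclic subgraph of `g`: it is finite, connected and unicyclic, and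
every non-leaf vertex of `H` is adjacent in `g` only to vertices of `H`. -/
def IsMaxUnicyclicSubgraph (g : SimpleGraph ℕ) (H : g.Subgraph) : Prop :=
  H.verts.Finite ∧ H.coe.Connected ∧ H.edgeSet.ncard = H.verts.ncard ∧
  ∀ u ∈ H.verts, 2 ≤ (H.neighborSet u).ncard → ∀ w : ℕ, g.Adj u w → w ∈ H.verts

/-- `N_U(n)`: the number of maximal unicyclic subgraphs of `g` isomorphic to `U`. -/
noncomputable def unicyclicCount (g : SimpleGraph ℕ) {t : ℕ} (U : SimpleGraph (Fin t)) : ℕ :=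
  {H : g.Subgraph | IsMaxUnicyclicSubgraph g H ∧ Nonempty (U ≃g H.coe)}.ncard

/-- A unicyclic graph is max-admissible if it occurs as a maximal unicyclic subgraph of a
possible value of `G_n` for all sufficiently large `n`. -/
def MaxAdmissibleUnicyclic (m d : ℕ) {t : ℕ} (U : SimpleGraph (Fin t)) : Prop :=
  ∃ N : ℕ, ∀ n : ℕ, N ≤ n → ∃ g : SimpleGraph ℕ, UAReachable m d n g ∧
    1 ≤ unicyclicCount g U

theorem attachStep_adj (g : SimpleGraph ℕ) (x : ℕ) (S : Finset ℕ) (a b : ℕ) :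
    (attachStep g x S).Adj a b ↔
      g.Adj a b ∨ (a ≠ b ∧ ((a = x ∧ b ∈ S) ∨ (b = x ∧ a ∈ S))) := by
  simp [attachStep]

theorem le_attachStep (g : SimpleGraph ℕ) (x : ℕ) (S : Finset ℕ) : g ≤ attachStep g x S :=
  le_sup_left

/-- The edges of `g` join vertices of `[n]`. -/
def SupportedOn (n : ℕ) (g : SimpleGraph ℕ) : Prop := ∀ a b, g.Adj a b → a ∈ Finset.Icc 1 n

theorem SupportedOn.neighborSet_subset {n : ℕ} {g : SimpleGraph ℕ} (h : SupportedOn n g) (v : ℕ) :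
    g.neighborSet v ⊆ (Finset.Icc 1 n : Finset ℕ) := fun w hw => h w v (SimpleGraph.Adj.symm hw)

theorem SupportedOn.finite_neighborSet {n : ℕ} {g : SimpleGraph ℕ} (h : SupportedOn n g) (v : ℕ) :
    (g.neighborSet v).Finite := (Finset.finite_toSet _).subset (h.neighborSet_subset v)

theorem SupportedOn.not_mem_neighborSet {n : ℕ} {g : SimpleGraph ℕ} (h : SupportedOn n g) (v : ℕ) :
    n + 1 ∉ g.neighborSet v := fun hw => by
  simpa using h.neighborSet_subset v hw

theorem neighborSet_attachStep_new {n : ℕ} {g : SimpleGraph ℕ} (h : SupportedOn n g)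
    {S : Finset ℕ} (hS : S ⊆ Finset.Icc 1 n) :
    (attachStep g (n + 1) S).neighborSet (n + 1) = S := by
  ext w
  simp only [SimpleGraph.mem_neighborSet, attachStep_adj, Finset.mem_coe]
  constructor
  · rintro (hw | ⟨hne, ⟨-, hw⟩ | ⟨rfl, hw⟩⟩)
    · simpa using h _ _ hw
    · exact hw
    · exact hw
  · intro hw
    have := Finset.mem_Icc.1 (hS hw)
    exact Or.inr ⟨by omega, Or.inl ⟨by trivial, hw⟩⟩

theorem neighborSet_attachStep_of_mem {n : ℕ} {g : SimpleGraph ℕ}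
    {S : Finset ℕ} (hS : S ⊆ Finset.Icc 1 n) {v : ℕ} (hv : v ∈ S) :
    (attachStep g (n + 1) S).neighborSet v = insert (n + 1) (g.neighborSet v) := by
  have hvn := Finset.mem_Icc.1 (hS hv)
  ext w
  simp only [SimpleGraph.mem_neighborSet, attachStep_adj, Set.mem_insert_iff]
  constructor
  · rintro (hw | ⟨hne, ⟨rfl, hw⟩ | ⟨rfl, hw⟩⟩)
    · exact Or.inr hw
    · omega
    · exact Or.inl rfl
  · rintro (rfl | hw)
    · exact Or.inr ⟨by omega, Or.inr ⟨rfl, hv⟩⟩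
    · exact Or.inl hw

theorem neighborSet_attachStep_of_notMem {n : ℕ} {g : SimpleGraph ℕ}
    {S : Finset ℕ} {v : ℕ} (hv : v ∉ S) (hvn : v ≠ n + 1) :
    (attachStep g (n + 1) S).neighborSet v = g.neighborSet v := by
  ext w
  simp only [SimpleGraph.mem_neighborSet, attachStep_adj]
  tauto

theorem SupportedOn.attachStep {n : ℕ} {g : SimpleGraph ℕ} (h : SupportedOn n g)
    {S : Finset ℕ} (hS : S ⊆ Finset.Icc 1 n) : SupportedOn (n + 1) (attachStep g (n + 1) S) := by
  intro a b hab
  rw [attachStep_adj] at hab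
  rcases hab with hab | ⟨-, ⟨rfl, -⟩ | ⟨-, ha⟩⟩
  · have := Finset.mem_Icc.1 (h a b hab)
    exact Finset.mem_Icc.2 ⟨this.1, by omega⟩
  · simp
  · have := Finset.mem_Icc.1 (hS ha)
    exact Finset.mem_Icc.2 ⟨this.1, by omega⟩

theorem graphDeg_attachStep_of_mem {n : ℕ} {g : SimpleGraph ℕ} (h : SupportedOn n g)
    {S : Finset ℕ} (hS : S ⊆ Finset.Icc 1 n) {v : ℕ} (hv : v ∈ S) :
    graphDeg (attachStep g (n + 1) S) v = graphDeg g v + 1 := by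
  rw [graphDeg, neighborSet_attachStep_of_mem hS hv,
    Set.ncard_insert_of_notMem (h.not_mem_neighborSet v) (h.finite_neighborSet v), graphDeg]

theorem graphDeg_attachStep_of_notMem {n : ℕ} {g : SimpleGraph ℕ}
    {S : Finset ℕ} {v : ℕ} (hv : v ∉ S) (hvn : v ≠ n + 1) :
    graphDeg (attachStep g (n + 1) S) v = graphDeg g v := by
  rw [graphDeg, neighborSet_attachStep_of_notMem hv hvn, graphDeg]

theorem graphDeg_attachStep_new {n : ℕ} {g : SimpleGraph ℕ} (h : SupportedOn n g)
    {S : Finset ℕ} (hS : S ⊆ Finset.Icc 1 n) :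
    graphDeg (attachStep g (n + 1) S) (n + 1) = S.card := by
  rw [graphDeg, neighborSet_attachStep_new h hS, Set.ncard_coe_finset]

theorem lowDegSet_subset (d : ℕ) (g : SimpleGraph ℕ) (n : ℕ) :
    lowDegSet d g n ⊆ Finset.Icc 1 n := Finset.filter_subset _ _

theorem mem_lowDegSet {d : ℕ} {g : SimpleGraph ℕ} {n v : ℕ} :
    v ∈ lowDegSet d g n ↔ v ∈ Finset.Icc 1 n ∧ graphDeg g v < d := Finset.mem_filter

/-- Deterministic properties shared by all graphs reachable at time `n`. -/
structure UAInvariant (m d n : ℕ) (g : SimpleGraph ℕ) : Prop where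
  le : m ≤ n
  supp : SupportedOn n g
  deg_le : ∀ v, graphDeg g v ≤ d
  late : ∀ v ∈ Finset.Icc 1 n, graphDeg g v + v ≤ m + n
  sum_le : ∑ v ∈ Finset.Icc 1 n, graphDeg g v ≤ 2 * m * n

theorem uaInvariant_init {m d : ℕ} (hd : 2 * m < d) : UAInvariant m d m (initGraph m) := by
  have hsupp : SupportedOn m (initGraph m) := by
    intro a b hab
    simp only [initGraph, SimpleGraph.fromRel_adj] at hab
    tauto
  have hdeg : ∀ v, graphDeg (initGraph m) v ≤ m := fun v => by
    simpa [graphDeg] using Set.ncard_le_ncard (hsupp.neighborSet_subset v) (Finset.finite_toSet _)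
  refine ⟨le_rfl, hsupp, fun v => (hdeg v).trans (by omega), fun v hv => ?_, ?_⟩
  · have := hdeg v
    have := Finset.mem_Icc.1 hv
    omega
  · calc _ ≤ ∑ v ∈ Finset.Icc 1 m, m := Finset.sum_le_sum fun v _ => hdeg v
      _ ≤ 2 * m * m := by simp; nlinarith

theorem UAInvariant.step {m d n : ℕ} (hd : 2 * m < d) {g : SimpleGraph ℕ}
    (h : UAInvariant m d n g) {S : Finset ℕ} (hS : S ⊆ lowDegSet d g n) (hc : S.card = m) :
    UAInvariant m d (n + 1) (attachStep g (n + 1) S) := by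
  have hSn := hS.trans (lowDegSet_subset d g n)
  have hx : n + 1 ∉ S := fun hx => by simpa using hSn hx
  have hnew := graphDeg_attachStep_new h.supp hSn
  have hdeg : ∀ v ∈ Finset.Icc 1 n, graphDeg (attachStep g (n + 1) S) v =
      graphDeg g v + if v ∈ S then 1 else 0 := by
    intro v hv
    split_ifs with hvS
    · exact graphDeg_attachStep_of_mem h.supp hSn hvS
    · have := Finset.mem_Icc.1 hv
      exact graphDeg_attachStep_of_notMem hvS (by omega)
  refine ⟨h.le.trans (Nat.le_succ n), h.supp.attachStep hSn, fun v => ?_, fun v hv => ?_, ?_⟩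
  · by_cases hvS : v ∈ S
    · have := (mem_lowDegSet.1 (hS hvS)).2
      rw [graphDeg_attachStep_of_mem h.supp hSn hvS]
      omega
    · by_cases hvn : v = n + 1
      · subst hvn; omega
      · rw [graphDeg_attachStep_of_notMem hvS hvn]
        exact h.deg_le v
  · have hv' := Finset.mem_Icc.1 hv
    by_cases hvn : v = n + 1
    · subst hvn; omega
    · have hvI : v ∈ Finset.Icc 1 n := Finset.mem_Icc.2 ⟨hv'.1, by omega⟩
      have := hdeg v hvI
      have := h.late v hvI
      split_ifs at * <;> omega
  · rw [Finset.sum_Icc_succ_top (by omega), hnew, Finset.sum_congr rfl hdeg,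
      Finset.sum_add_distrib, Finset.sum_ite_mem,
      Finset.inter_eq_right.2 hSn]
    have := h.sum_le
    simp only [Finset.sum_const, smul_eq_mul, mul_one]
    nlinarith

theorem UAReachable.invariant {m d n : ℕ} (hd : 2 * m < d) {g : SimpleGraph ℕ}
    (h : UAReachable m d n g) : UAInvariant m d n g := by
  induction h with
  | init => exact uaInvariant_init hd
  | step _ _ hS hc ih => exact ih.step hd hS hc

theorem UAInvariant.le_card_lowDegSet {m d n : ℕ} (hd : 2 * m < d) {g : SimpleGraph ℕ}
    (h : UAInvariant m d n g) : m ≤ (lowDegSet d g n).card := by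
  have hle := h.le
  have : Finset.Icc (n + 1 - m) n ⊆ lowDegSet d g n := by
    intro v hv
    have hv' := Finset.mem_Icc.1 hv
    have hvI : v ∈ Finset.Icc 1 n := Finset.mem_Icc.2 ⟨by omega, by omega⟩
    have := h.late v hvI
    exact mem_lowDegSet.2 ⟨hvI, by omega⟩
  calc m = (Finset.Icc (n + 1 - m) n).card := by simp; omega
    _ ≤ _ := Finset.card_le_card this

theorem card_lowDegSet_le (d : ℕ) (g : SimpleGraph ℕ) (n : ℕ) : (lowDegSet d g n).card ≤ n := by
  simpa using Finset.card_le_card (lowDegSet_subset d g n)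

theorem UAInvariant.le_mul_card_lowDegSet {m d n : ℕ} (hd : 2 * m < d) {g : SimpleGraph ℕ}
    (h : UAInvariant m d n g) : n ≤ d * (lowDegSet d g n).card := by
  have hsplit : (lowDegSet d g n).card +
      ((Finset.Icc 1 n).filter (fun v => ¬ graphDeg g v < d)).card = n := by
    have := Finset.card_filter_add_card_filter_not (s := Finset.Icc 1 n) (fun v => graphDeg g v < d)
    simpa [lowDegSet] using this
  have hfull : ((Finset.Icc 1 n).filter (fun v => ¬ graphDeg g v < d)).card * d ≤ 2 * m * n := by
    calc _ = ∑ v ∈ (Finset.Icc 1 n).filter (fun v => ¬ graphDeg g v < d), d := by simp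
      _ ≤ ∑ v ∈ (Finset.Icc 1 n).filter (fun v => ¬ graphDeg g v < d), graphDeg g v :=
          Finset.sum_le_sum fun v hv => not_lt.1 (Finset.mem_filter.1 hv).2
      _ ≤ ∑ v ∈ Finset.Icc 1 n, graphDeg g v :=
          Finset.sum_le_sum_of_subset (Finset.filter_subset _ _)
      _ ≤ _ := h.sum_le
  nlinarith

/-- The expectation of `ψ S`, where `S` is the random attachment set chosen from the graph `g`
at time `n`. -/
noncomputable def stepAvg (m d n : ℕ) (g : SimpleGraph ℕ) (ψ : Finset ℕ → ℝ) : ℝ :=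
  (∑ S ∈ (lowDegSet d g n).powersetCard m, ψ S) / ((lowDegSet d g n).card.choose m : ℝ)

theorem stepAvg_mono {m d n : ℕ} {g : SimpleGraph ℕ} {ψ ψ' : Finset ℕ → ℝ}
    (h : ∀ S, S ⊆ lowDegSet d g n → S.card = m → ψ S ≤ ψ' S) :
    stepAvg m d n g ψ ≤ stepAvg m d n g ψ' := by
  unfold stepAvg
  gcongr with S hS
  exact h S (Finset.mem_powersetCard.1 hS).1 (Finset.mem_powersetCard.1 hS).2

theorem stepAvg_add (m d n : ℕ) (g : SimpleGraph ℕ) (ψ ψ' : Finset ℕ → ℝ) :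
    stepAvg m d n g (fun S => ψ S + ψ' S) = stepAvg m d n g ψ + stepAvg m d n g ψ' := by
  simp [stepAvg, Finset.sum_add_distrib, add_div]

theorem stepAvg_sub (m d n : ℕ) (g : SimpleGraph ℕ) (ψ ψ' : Finset ℕ → ℝ) :
    stepAvg m d n g (fun S => ψ S - ψ' S) = stepAvg m d n g ψ - stepAvg m d n g ψ' := by
  simp [stepAvg, Finset.sum_sub_distrib, sub_div]

theorem stepAvg_const_mul (m d n : ℕ) (g : SimpleGraph ℕ) (c : ℝ) (ψ : Finset ℕ → ℝ) :
    stepAvg m d n g (fun S => c * ψ S) = c * stepAvg m d n g ψ := by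
  simp [stepAvg, ← Finset.mul_sum, mul_div_assoc]

theorem stepAvg_sum (m d n : ℕ) (g : SimpleGraph ℕ) {ι : Type*} (s : Finset ι)
    (ψ : ι → Finset ℕ → ℝ) :
    stepAvg m d n g (fun S => ∑ i ∈ s, ψ i S) = ∑ i ∈ s, stepAvg m d n g (ψ i) := by
  simp only [stepAvg, ← Finset.sum_div]
  rw [Finset.sum_comm]

theorem choose_card_lowDegSet_pos {m d n : ℕ} (hd : 2 * m < d) {g : SimpleGraph ℕ}
    (h : UAInvariant m d n g) : 0 < ((lowDegSet d g n).card.choose m : ℝ) := by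
  exact_mod_cast Nat.choose_pos (h.le_card_lowDegSet hd)

theorem stepAvg_const {m d n : ℕ} (hd : 2 * m < d) {g : SimpleGraph ℕ}
    (h : UAInvariant m d n g) (c : ℝ) : stepAvg m d n g (fun _ => c) = c := by
  have := choose_card_lowDegSet_pos hd h
  simp only [stepAvg, Finset.sum_const, Finset.card_powersetCard, nsmul_eq_mul]
  field_simp

theorem stepAvg_indicator (m d n : ℕ) (g : SimpleGraph ℕ) (p : Finset ℕ → Prop)
    [DecidablePred p] :
    stepAvg m d n g (fun S => if p S then 1 else 0) =
      (((lowDegSet d g n).powersetCard m).filter p).card /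
        ((lowDegSet d g n).card.choose m : ℝ) := by
  simp [stepAvg]

theorem stepAvg_mem_le {m d n : ℕ} (hm : 1 ≤ m) (hd : 2 * m < d) {g : SimpleGraph ℕ}
    (h : UAInvariant m d n g) (v : ℕ) :
    stepAvg m d n g (fun S => if v ∈ S then 1 else 0) ≤ m * d / n := by
  classical
  have hpos := choose_card_lowDegSet_pos hd h
  have hL : n ≤ d * (lowDegSet d g n).card := h.le_mul_card_lowDegSet hd
  have hLm := h.le_card_lowDegSet hd
  have hn : 0 < n := by have := h.le; omega
  rw [stepAvg_indicator, div_le_div_iff₀ hpos (by exact_mod_cast hn)]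
  norm_cast
  set L := (lowDegSet d g n).card with hLdef
  by_cases hv : v ∈ lowDegSet d g n
  · have hcard : (((lowDegSet d g n).powersetCard m).filter (fun S => v ∈ S)).card ≤
        (L - 1).choose (m - 1) := by
      rw [hLdef, ← Finset.card_erase_of_mem hv, ← Finset.card_powersetCard]
      refine Finset.card_le_card_of_injOn (fun S => S.erase v) ?_ ?_
      · intro S hS
        simp only [Finset.coe_filter, Finset.mem_powersetCard, Set.mem_ofPred_eq] at hS
        simp only [Finset.mem_coe, Finset.mem_powersetCard]
        exact ⟨Finset.erase_subset_erase v hS.1.1, by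
          rw [Finset.card_erase_of_mem hS.2, hS.1.2]⟩
      · intro S hS S' hS' heq
        simp only [Finset.coe_filter, Set.mem_ofPred_eq] at hS hS'
        rw [← Finset.insert_erase hS.2, ← Finset.insert_erase hS'.2]
        simp only at heq
        rw [heq]
    have hid : L * (L - 1).choose (m - 1) = L.choose m * m := by
      obtain ⟨L', hL'⟩ : ∃ L', L = L' + 1 := ⟨L - 1, by omega⟩
      obtain ⟨m', rfl⟩ : ∃ m', m = m' + 1 := ⟨m - 1, by omega⟩
      rw [hL']
      exact Nat.add_one_mul_choose_eq L' m'
    calc _ ≤ (L - 1).choose (m - 1) * (d * L) := Nat.mul_le_mul hcard hL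
      _ = d * (L * (L - 1).choose (m - 1)) := by ring
      _ = m * d * L.choose m := by rw [hid]; ring
  · have : (((lowDegSet d g n).powersetCard m).filter (fun S => v ∈ S)) = ∅ := by
      rw [Finset.filter_eq_empty_iff]
      exact fun S hS hvS => hv ((Finset.mem_powersetCard.1 hS).1 hvS)
    simp [this]

theorem choose_ratio_lower (c : ℝ) (hc : 0 < c) (i : ℕ) :
    ∃ a : ℝ, 0 < a ∧ ∃ N : ℕ, ∀ n : ℕ, N ≤ n → ∀ r : ℕ, c * n ≤ r →
      a * (n : ℝ) ^ i ≤ r.choose i := by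
  obtain ⟨N, hN⟩ := exists_nat_gt (2 * i / c)
  refine ⟨(c / 2) ^ i / i.factorial, by positivity, N, fun n hn r hr => ?_⟩
  have hn' : (N : ℝ) ≤ n := by exact_mod_cast hn
  have h2 : 2 * (i : ℝ) ≤ c * n := by
    rw [div_lt_iff₀ hc] at hN
    nlinarith
  have hir : i ≤ r + 1 := by
    have : (i : ℝ) ≤ r := by have : (0 : ℝ) ≤ i := by positivity
                             linarith
    have : i ≤ r := by exact_mod_cast this
    omega
  have hbase : c / 2 * n ≤ ((r + 1 - i : ℕ) : ℝ) := by
    push_cast [Nat.cast_sub hir]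
    linarith
  have h3 : ((r + 1 - i) ^ i : ℕ) / (i.factorial : ℝ) ≤ r.choose i := by
    exact_mod_cast Nat.pow_le_choose (α := ℝ) i r
  refine le_trans ?_ h3
  rw [div_mul_eq_mul_div, ← mul_pow]
  push_cast
  gcongr

/-- The families of attachment sets of linear-size choice have probability of the expected order. -/
theorem le_stepAvg_indicator {m d n : ℕ} (hd : 2 * m < d) {g : SimpleGraph ℕ}
    (h : UAInvariant m d n g) (p : Finset ℕ → Prop) [DecidablePred p] {i : ℕ} (him : i ≤ m)
    (hn : 0 < n) {a : ℝ} (T : Finset (Finset ℕ))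
    (hT : ∀ S ∈ T, S ⊆ lowDegSet d g n ∧ S.card = m ∧ p S) (hcard : a * (n : ℝ) ^ i ≤ T.card) :
    a / (n : ℝ) ^ (m - i) ≤ stepAvg m d n g (fun S => if p S then 1 else 0) := by
  classical
  have hpos := choose_card_lowDegSet_pos hd h
  have hn' : (0 : ℝ) < n := by exact_mod_cast hn
  have hch : ((lowDegSet d g n).card.choose m : ℝ) ≤ (n : ℝ) ^ m := by
    calc ((lowDegSet d g n).card.choose m : ℝ) ≤ ((lowDegSet d g n).card ^ m : ℕ) := by
          exact_mod_cast Nat.choose_le_pow _ _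
      _ ≤ (n : ℝ) ^ m := by
          push_cast
          gcongr
          exact card_lowDegSet_le d g n
  have hsub : (T.card : ℝ) ≤ (((lowDegSet d g n).powersetCard m).filter p).card := by
    exact_mod_cast Finset.card_le_card fun S hS => by
      obtain ⟨h1, h2, h3⟩ := hT S hS
      exact Finset.mem_filter.2 ⟨Finset.mem_powersetCard.2 ⟨h1, h2⟩, h3⟩
  rw [stepAvg_indicator, div_le_div_iff₀ (by positivity) hpos]
  by_cases ha : 0 ≤ a
  · calc a * ((lowDegSet d g n).card.choose m : ℝ) ≤ a * (n : ℝ) ^ m := by gcongr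
      _ = (a * (n : ℝ) ^ i) * (n : ℝ) ^ (m - i) := by
          rw [mul_assoc, ← pow_add, Nat.add_sub_cancel' him]
      _ ≤ _ := by gcongr; exact hcard.trans hsub
  · push Not at ha
    have h1 : a * ((lowDegSet d g n).card.choose m : ℝ) ≤ 0 := by nlinarith
    exact h1.trans (by positivity)

theorem UAReachable.eq_init_or_step {m d n : ℕ} {g : SimpleGraph ℕ} (h : UAReachable m d n g) :
    (n = m ∧ g = initGraph m) ∨ ∃ n' g' S, n = n' + 1 ∧ m ≤ n' ∧ UAReachable m d n' g' ∧
      S ⊆ lowDegSet d g' n' ∧ S.card = m ∧ g = attachStep g' (n' + 1) S := by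
  cases h with
  | init => exact Or.inl ⟨rfl, rfl⟩
  | step h1 h2 h3 h4 => exact Or.inr ⟨_, _, _, rfl, h1, h2, h3, h4, rfl⟩

theorem finite_uaReachable (m d n : ℕ) : {g | UAReachable m d n g}.Finite := by
  induction n with
  | zero =>
    refine (Set.finite_singleton (initGraph m)).subset fun g hg => ?_
    rcases UAReachable.eq_init_or_step hg with ⟨-, rfl⟩ | ⟨n', _, _, h, _⟩
    · rfl
    · omega
  | succ n ih =>
    have hfin : (⋃ g ∈ {g | UAReachable m d n g},
        (fun S => attachStep g (n + 1) S) ''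
          ((lowDegSet d g n).powerset : Set (Finset ℕ))).Finite :=
      ih.biUnion fun g _ => (Finset.finite_toSet _).image _
    refine (hfin.union (Set.finite_singleton (initGraph m))).subset fun g hg => ?_
    rcases UAReachable.eq_init_or_step hg with ⟨-, rfl⟩ | ⟨n', g', S, h, -, hr, hS, -, rfl⟩
    · exact Or.inr rfl
    · obtain rfl : n = n' := by omega
      refine Or.inl (Set.mem_biUnion (show g' ∈ {g | UAReachable m d n g} from hr) ⟨S, ?_, rfl⟩)
      simpa using hS

/-- The expectation of `f (G n)` over the reachable values of `G n`. -/
noncomputable def lawSum (m d : ℕ) {Ω : Type*} [MeasurableSpace Ω] (μ : Measure Ω)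
    (G : ℕ → Ω → SimpleGraph ℕ) (n : ℕ) (f : SimpleGraph ℕ → ℝ) : ℝ :=
  ∑ g ∈ (finite_uaReachable m d n).toFinset, μ.real {ω | G n ω = g} * f g

theorem lawSum_mono {m d : ℕ} {Ω : Type*} [MeasurableSpace Ω] {μ : Measure Ω}
    {G : ℕ → Ω → SimpleGraph ℕ} {n : ℕ} {f f' : SimpleGraph ℕ → ℝ}
    (h : ∀ g, UAReachable m d n g → f g ≤ f' g) : lawSum m d μ G n f ≤ lawSum m d μ G n f' :=
  Finset.sum_le_sum fun g hg =>
    mul_le_mul_of_nonneg_left (h g (by simpa using hg)) measureReal_nonneg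

theorem lawSum_add_mul {m d : ℕ} {Ω : Type*} [MeasurableSpace Ω] {μ : Measure Ω}
    {G : ℕ → Ω → SimpleGraph ℕ} {n : ℕ} (a b : ℝ) (f f' : SimpleGraph ℕ → ℝ) :
    lawSum m d μ G n (fun g => a * f g + b * f' g) =
      a * lawSum m d μ G n f + b * lawSum m d μ G n f' := by
  simp only [lawSum, Finset.mul_sum, ← Finset.sum_add_distrib]
  exact Finset.sum_congr rfl fun g _ => by ring

theorem attachStep_injOn {n : ℕ} {g : SimpleGraph ℕ} (h : SupportedOn n g) {S S' : Finset ℕ}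
    (hS : S ⊆ Finset.Icc 1 n) (hS' : S' ⊆ Finset.Icc 1 n)
    (heq : attachStep g (n + 1) S = attachStep g (n + 1) S') : S = S' := by
  have h1 := neighborSet_attachStep_new h hS
  rw [heq, neighborSet_attachStep_new h hS'] at h1
  exact_mod_cast h1.symm

section Law

variable {m d : ℕ} {Ω : Type*} [MeasurableSpace Ω] {μ : Measure Ω} [IsProbabilityMeasure μ]
  {G : ℕ → Ω → SimpleGraph ℕ}

theorem lawSum_stepAvg_le (hd : 2 * m < d) (hG : IsUAProcess m d μ G) {n : ℕ} (hn : m ≤ n)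
    (f : SimpleGraph ℕ → ℝ) (hf : ∀ g, UAReachable m d (n + 1) g → 0 ≤ f g) :
    lawSum m d μ G n (fun g => stepAvg m d n g (fun S => f (attachStep g (n + 1) S))) ≤
      lawSum m d μ G (n + 1) f := by
  classical
  obtain ⟨hmeas, -, hstep⟩ := hG
  set E : (Σ _ : SimpleGraph ℕ, Finset ℕ) → Set Ω := fun q =>
    {ω | G (n + 1) ω = attachStep q.1 (n + 1) q.2} ∩ {ω | G n ω = q.1} with hE
  set I : Finset (Σ _ : SimpleGraph ℕ, Finset ℕ) :=
    (finite_uaReachable m d n).toFinset.sigma (fun g => (lowDegSet d g n).powersetCard m) with hI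
  have hmem : ∀ q ∈ I, UAReachable m d n q.1 ∧ q.2 ⊆ lowDegSet d q.1 n ∧ q.2.card = m := by
    intro q hq
    simpa [hI, Finset.mem_powersetCard] using hq
  have hmap : ∀ q ∈ I, attachStep q.1 (n + 1) q.2 ∈ (finite_uaReachable m d (n + 1)).toFinset := by
    intro q hq
    obtain ⟨h1, h2, h3⟩ := hmem q hq
    simpa using UAReachable.step hn h1 h2 h3
  have hleft : lawSum m d μ G n (fun g => stepAvg m d n g (fun S => f (attachStep g (n + 1) S))) =
      ∑ q ∈ I, μ.real (E q) * f (attachStep q.1 (n + 1) q.2) := by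
    rw [hI, Finset.sum_sigma, lawSum]
    refine Finset.sum_congr rfl fun g _ => ?_
    rw [stepAvg, mul_div_assoc', Finset.mul_sum, Finset.sum_div]
    refine Finset.sum_congr rfl fun S hS => ?_
    obtain ⟨h1, h2⟩ := Finset.mem_powersetCard.1 hS
    have hreal := congrArg ENNReal.toReal (hstep n hn g S h1 h2)
    rw [ENNReal.toReal_div, ENNReal.toReal_natCast] at hreal
    simp only [hE, Measure.real, hreal]
    ring
  rw [hleft, ← Finset.sum_fiberwise_of_maps_to hmap, lawSum]
  refine Finset.sum_le_sum fun g' hg' => ?_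
  have hfiber : ∀ q ∈ I.filter (fun q => attachStep q.1 (n + 1) q.2 = g'),
      E q ⊆ {ω | G (n + 1) ω = g'} := by
    intro q hq ω hω
    rw [← (Finset.mem_filter.1 hq).2]
    exact hω.1
  calc ∑ q ∈ I.filter (fun q => attachStep q.1 (n + 1) q.2 = g'),
        μ.real (E q) * f (attachStep q.1 (n + 1) q.2)
      = (∑ q ∈ I.filter (fun q => attachStep q.1 (n + 1) q.2 = g'), μ.real (E q)) * f g' := by
        rw [Finset.sum_mul]
        exact Finset.sum_congr rfl fun q hq => by rw [(Finset.mem_filter.1 hq).2]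
    _ ≤ _ := by
        refine mul_le_mul_of_nonneg_right ?_ (hf g' (by simpa using hg'))
        rw [← measureReal_biUnion_finset]
        · exact measureReal_mono (Set.iUnion₂_subset hfiber)
        · intro q hq q' hq' hne
          refine Set.disjoint_left.2 fun ω hω hω' => hne ?_
          obtain ⟨hqI, hqg⟩ := Finset.mem_filter.1 hq
          obtain ⟨hqI', hqg'⟩ := Finset.mem_filter.1 hq'
          obtain ⟨g₁, S₁⟩ := q
          obtain ⟨g₂, S₂⟩ := q'
          obtain rfl : g₁ = g₂ := hω.2.symm.trans hω'.2
          have hr := hmem _ hqI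
          have hr' := hmem _ hqI'
          obtain rfl : S₁ = S₂ := attachStep_injOn (hr.1.invariant hd).supp
            (hr.2.1.trans (lowDegSet_subset _ _ _)) (hr'.2.1.trans (lowDegSet_subset _ _ _))
            (hqg.trans hqg'.symm)
          rfl
        · exact fun q _ => (hmeas _ _).inter (hmeas _ _)

open Classical in
theorem lawSum_indicator_le (hG : IsUAProcess m d μ G) (n : ℕ) (Z : SimpleGraph ℕ → Prop) :
    ENNReal.ofReal (lawSum m d μ G n (fun g => if Z g then 1 else 0)) ≤ μ {ω | Z (G n ω)} := by
  obtain ⟨hmeas, -, -⟩ := hG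
  have : lawSum m d μ G n (fun g => if Z g then 1 else 0) =
      μ.real (⋃ g ∈ (finite_uaReachable m d n).toFinset.filter Z, {ω | G n ω = g}) := by
    rw [measureReal_biUnion_finset]
    · simp [lawSum, Finset.sum_filter]
    · intro g _ g' _ hne
      exact Set.disjoint_left.2 fun ω hω hω' => hne (hω.symm.trans hω')
    · exact fun g _ => hmeas _ _
  rw [this, ofReal_measureReal (measure_ne_top μ _)]
  refine measure_mono (Set.iUnion₂_subset fun g hg ω hω => ?_)
  have hω' : G n ω = g := hω
  simpa [hω'] using (Finset.mem_filter.1 hg).2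

theorem lawSum_indicator_le_one (hG : IsUAProcess m d μ G) (n : ℕ) (Z : SimpleGraph ℕ → Prop)
    [DecidablePred Z] : lawSum m d μ G n (fun g => if Z g then 1 else 0) ≤ 1 := by
  have h := (lawSum_indicator_le hG n Z).trans prob_le_one
  rw [ENNReal.ofReal_le_one] at h
  convert h

theorem lawSum_one (hd : 2 * m < d) (hG : IsUAProcess m d μ G) {n : ℕ} (hn : m ≤ n) :
    lawSum m d μ G n (fun _ => 1) = 1 := by
  refine le_antisymm ?_ ?_
  · simpa using lawSum_indicator_le_one hG n (fun _ => True)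
  · induction n, hn using Nat.le_induction with
    | base =>
      have hmem : initGraph m ∈ (finite_uaReachable m d m).toFinset := by
        simpa using UAReachable.init
      calc (1 : ℝ) = μ.real {ω | G m ω = initGraph m} * 1 := by simp [hG.2.1]
        _ ≤ _ := Finset.single_le_sum (f := fun g => μ.real {ω | G m ω = g} * 1)
            (fun g _ => by positivity) hmem
    | succ n hn ih =>
      refine (ih.trans (le_of_eq ?_)).trans
        (lawSum_stepAvg_le hd hG hn (fun _ => 1) fun _ _ => zero_le_one)
      refine Finset.sum_congr rfl fun g hg => ?_
      simp only [stepAvg_const hd (UAReachable.invariant hd (by simpa using hg))]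

end Law

open Classical in
/-- The probability that the process started from `g` at time `n` satisfies `Z` after `k` steps. -/
noncomputable def valueIter (m d : ℕ) (Z : SimpleGraph ℕ → Prop) : ℕ → ℕ → SimpleGraph ℕ → ℝ
  | 0, _, g => if Z g then 1 else 0
  | k + 1, n, g => stepAvg m d n g (fun S => valueIter m d Z k (n + 1) (attachStep g (n + 1) S))

/-- The probability that the process started from `g` at time `n` eventually satisfies `Z`
(for a property `Z` that persists). -/
noncomputable def hitValue (m d : ℕ) (Z : SimpleGraph ℕ → Prop) (n : ℕ) (g : SimpleGraph ℕ) : ℝ :=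
  ⨆ k, valueIter m d Z k n g

/-- The property `Z` is preserved by the steps of the process. -/
def Persistent (m d : ℕ) (Z : SimpleGraph ℕ → Prop) : Prop :=
  ∀ n g S, UAReachable m d n g → S ⊆ lowDegSet d g n → S.card = m → Z g →
    Z (attachStep g (n + 1) S)

section Value

variable {m d : ℕ} {Z : SimpleGraph ℕ → Prop}

theorem UAReachable.attach {n : ℕ} {g : SimpleGraph ℕ} (hd : 2 * m < d) (h : UAReachable m d n g)
    {S : Finset ℕ} (hS : S ⊆ lowDegSet d g n) (hc : S.card = m) :
    UAReachable m d (n + 1) (attachStep g (n + 1) S) :=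
  UAReachable.step (h.invariant hd).le h hS hc

theorem valueIter_mem_Icc (hd : 2 * m < d) (k : ℕ) {n : ℕ} {g : SimpleGraph ℕ}
    (h : UAReachable m d n g) : valueIter m d Z k n g ∈ Set.Icc (0 : ℝ) 1 := by
  induction k generalizing n g with
  | zero => simp only [valueIter]; split_ifs <;> simp
  | succ k ih =>
    have hi := h.invariant hd
    simp only [valueIter]
    constructor
    · rw [← stepAvg_const hd hi 0]
      exact stepAvg_mono fun S hS hc => (ih (h.attach hd hS hc)).1
    · rw [← stepAvg_const hd hi 1]
      exact stepAvg_mono fun S hS hc => (ih (h.attach hd hS hc)).2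

theorem valueIter_of_persistent (hd : 2 * m < d) (hZ : Persistent m d Z) (k : ℕ) {n : ℕ}
    {g : SimpleGraph ℕ} (h : UAReachable m d n g) (hg : Z g) : valueIter m d Z k n g = 1 := by
  induction k generalizing n g with
  | zero => simp [valueIter, hg]
  | succ k ih =>
    refine le_antisymm (valueIter_mem_Icc hd _ h).2 ?_
    simp only [valueIter]
    rw [← stepAvg_const hd (h.invariant hd) 1]
    exact stepAvg_mono fun S hS hc =>
      (ih (h.attach hd hS hc) (hZ n g S h hS hc hg)).ge

theorem valueIter_le_succ (hd : 2 * m < d) (hZ : Persistent m d Z) (k : ℕ) {n : ℕ}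
    {g : SimpleGraph ℕ} (h : UAReachable m d n g) :
    valueIter m d Z k n g ≤ valueIter m d Z (k + 1) n g := by
  induction k generalizing n g with
  | zero =>
    by_cases hg : Z g
    · rw [valueIter_of_persistent hd hZ _ h hg, valueIter_of_persistent hd hZ _ h hg]
    · simpa [valueIter, hg] using (valueIter_mem_Icc (Z := Z) hd 1 h).1
  | succ k ih =>
    rw [valueIter, valueIter]
    exact stepAvg_mono fun S hS hc => ih (h.attach hd hS hc)

theorem tendsto_valueIter (hd : 2 * m < d) (hZ : Persistent m d Z) {n : ℕ}
    {g : SimpleGraph ℕ} (h : UAReachable m d n g) :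
    Tendsto (fun k => valueIter m d Z k n g) atTop (𝓝 (hitValue m d Z n g)) :=
  tendsto_atTop_ciSup (monotone_nat_of_le_succ fun k => valueIter_le_succ hd hZ k h)
    ⟨1, by rintro _ ⟨k, rfl⟩; exact (valueIter_mem_Icc hd k h).2⟩

theorem hitValue_nonneg (hd : 2 * m < d) (hZ : Persistent m d Z) {n : ℕ}
    {g : SimpleGraph ℕ} (h : UAReachable m d n g) : 0 ≤ hitValue m d Z n g :=
  ge_of_tendsto' (tendsto_valueIter hd hZ h) fun k => (valueIter_mem_Icc hd k h).1

theorem hitValue_of_mem (hd : 2 * m < d) (hZ : Persistent m d Z) {n : ℕ}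
    {g : SimpleGraph ℕ} (h : UAReachable m d n g) (hg : Z g) : hitValue m d Z n g = 1 := by
  simp [hitValue, valueIter_of_persistent hd hZ _ h hg]

theorem hitValue_eq_stepAvg (hd : 2 * m < d) (hZ : Persistent m d Z) {n : ℕ}
    {g : SimpleGraph ℕ} (h : UAReachable m d n g) :
    hitValue m d Z n g =
      stepAvg m d n g (fun S => hitValue m d Z (n + 1) (attachStep g (n + 1) S)) := by
  refine tendsto_nhds_unique ((tendsto_valueIter hd hZ h).comp (tendsto_add_atTop_nat 1)) ?_
  simp only [Function.comp_def, valueIter, stepAvg]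
  refine Tendsto.div_const (tendsto_finsetSum _ fun S hS => ?_) _
  obtain ⟨h1, h2⟩ := Finset.mem_powersetCard.1 hS
  exact tendsto_valueIter hd hZ (h.attach hd h1 h2)

end Value

section Limit

variable {m d : ℕ} {Ω : Type*} [MeasurableSpace Ω] {μ : Measure Ω} [IsProbabilityMeasure μ]
  {G : ℕ → Ω → SimpleGraph ℕ} {Z Z' : SimpleGraph ℕ → Prop}

open Classical in
theorem lawSum_valueIter_le (hd : 2 * m < d) (hG : IsUAProcess m d μ G) (k : ℕ) {n : ℕ}
    (hn : m ≤ n) : lawSum m d μ G n (valueIter m d Z k n) ≤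
      lawSum m d μ G (n + k) (fun g => if Z g then 1 else 0) := by
  induction k generalizing n with
  | zero => exact le_of_eq rfl
  | succ k ih =>
    have h1 := ih (n := n + 1) (by omega)
    rw [show n + 1 + k = n + (k + 1) by omega] at h1
    refine le_trans ?_ h1
    exact lawSum_stepAvg_le hd hG hn _ fun g hg => (valueIter_mem_Icc hd k hg).1

open Classical in
/-- If `Z'` holds with probability tending to one, and from every late state satisfying `Z'` the
persistent property `Z` is reached with probability bounded away from zero, then `Z` holds with
probability tending to one. -/
theorem tendsto_lawSum_of_hitValue (hd : 2 * m < d) (hG : IsUAProcess m d μ G)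
    (hZ : Persistent m d Z)
    (hZ' : Tendsto (fun n => lawSum m d μ G n (fun g => if Z' g then 1 else 0)) atTop (𝓝 1))
    {ε : ℝ} (hε : 0 < ε) {N : ℕ}
    (hval : ∀ n, N ≤ n → ∀ g, UAReachable m d n g → Z' g → ε ≤ hitValue m d Z n g) :
    Tendsto (fun n => lawSum m d μ G n (fun g => if Z g then 1 else 0)) atTop (𝓝 1) := by
  wlog hε1 : ε ≤ 1 generalizing ε
  · exact this zero_lt_one
      (fun n hn g hg hZg => (not_le.1 hε1).le.trans (hval n hn g hg hZg)) le_rfl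
  set a : ℕ → ℝ := fun n => lawSum m d μ G n (fun g => if Z g then 1 else 0) with ha
  have hmono : Monotone fun i => a (i + m) := by
    refine monotone_nat_of_le_succ fun i => ?_
    have h1 := lawSum_valueIter_le (Z := Z) hd hG 1 (n := i + m) (by omega)
    rw [show i + 1 + m = i + m + 1 by omega]
    exact le_trans (lawSum_mono fun g hg => valueIter_le_succ hd hZ 0 hg) h1
  have hbdd : BddAbove (Set.range fun i => a (i + m)) :=
    ⟨1, by rintro _ ⟨i, rfl⟩; exact lawSum_indicator_le_one hG _ Z⟩
  set A := ⨆ i, a (i + m) with hA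
  have hlim : Tendsto a atTop (𝓝 A) :=
    (tendsto_add_atTop_iff_nat m).1 (tendsto_atTop_ciSup hmono hbdd)
  have hA1 : A ≤ 1 := le_of_tendsto' hlim fun n => lawSum_indicator_le_one hG n Z
  have hkey : ∀ n, max N m ≤ n →
      (1 - ε) * a n + ε * lawSum m d μ G n (fun g => if Z' g then 1 else 0) ≤ A := by
    intro n hn
    have hnm : m ≤ n := (le_max_right _ _).trans hn
    have hnN : N ≤ n := (le_max_left _ _).trans hn
    have hconv : Tendsto (fun k => lawSum m d μ G n (valueIter m d Z k n)) atTop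
        (𝓝 (lawSum m d μ G n (hitValue m d Z n))) :=
      tendsto_finsetSum _ fun g hg =>
        (tendsto_valueIter hd hZ (by simpa using hg)).const_mul _
    have hle : lawSum m d μ G n (hitValue m d Z n) ≤ A := by
      refine le_of_tendsto' hconv fun k => (lawSum_valueIter_le hd hG k hnm).trans ?_
      have := le_ciSup hbdd (n + k - m)
      simpa [show n + k - m + m = n + k by omega, ha] using this
    refine le_trans ?_ hle
    rw [ha, ← lawSum_add_mul]
    refine lawSum_mono fun g hg => ?_
    by_cases hZg : Z g
    · rw [hitValue_of_mem hd hZ hg hZg]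
      split_ifs <;> linarith
    · by_cases hZg' : Z' g
      · simpa [hZg, hZg'] using hval n hnN g hg hZg'
      · simpa [hZg, hZg'] using hitValue_nonneg hd hZ hg
  have hlimkey : (1 - ε) * A + ε * 1 ≤ A :=
    le_of_tendsto ((hlim.const_mul _).add (hZ'.const_mul _))
      (eventually_atTop.2 ⟨max N m, hkey⟩)
  have : A = 1 := le_antisymm hA1 (by nlinarith)
  rwa [this] at hlim

end Limit

section Unicyclic

open Classical in
/-- The sum of the degrees of the subgraph of `U` induced on `D`. -/
noncomputable def innerDegSum {V : Type*} (U : SimpleGraph V) (D : Finset V) : ℕ :=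
  ∑ u ∈ D, (D.filter (U.Adj u)).card

variable {V : Type*} {U : SimpleGraph V}

open Classical in
theorem innerDegSum_insert [DecidableEq V] {D : Finset V} {v : V} (hv : v ∉ D) :
    innerDegSum U (insert v D) = innerDegSum U D + 2 * (D.filter (U.Adj v)).card := by
  have h1 : ∀ u ∈ D, ((insert v D).filter (U.Adj u)).card =
      (D.filter (U.Adj u)).card + if U.Adj v u then 1 else 0 := by
    intro u hu
    rw [Finset.filter_insert]
    simp only [U.adj_comm v u]
    split_ifs with h
    · rw [Finset.card_insert_of_notMem (by simp [hv])]
    · rfl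
  rw [innerDegSum, Finset.sum_insert hv, Finset.sum_congr rfl h1, Finset.sum_add_distrib,
    Finset.filter_insert, if_neg (U.loopless.irrefl v), ← Finset.card_filter, innerDegSum]
  ring

theorem exists_adj_of_connected [Fintype V] (hU : U.Connected) {D : Finset V} (hD : D.Nonempty)
    (hne : D ≠ Finset.univ) : ∃ b ∈ D, ∃ v ∉ D, U.Adj b v := by
  by_contra! hcon
  obtain ⟨b, hb⟩ := hD
  refine hne (Finset.eq_univ_iff_forall.2 fun v => ?_)
  obtain ⟨p⟩ := hU.preconnected b v
  induction p with
  | nil => exact hb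
  | cons h p ih => exact ih (by_contra fun hv => hcon _ hb _ hv h)

open Classical in
theorem innerDegSum_le [Fintype V] (hU : U.Connected) (he : U.edgeSet.ncard = Fintype.card V)
    {D : Finset V} (hD : D.Nonempty) : innerDegSum U D ≤ 2 * D.card := by
  induction hq : Dᶜ.card generalizing D with
  | zero =>
    have : D = Finset.univ := by simpa using hq
    subst this
    have h := U.sum_degrees_eq_twice_card_edges
    rw [← SimpleGraph.coe_edgeFinset, Set.ncard_coe_finset] at he
    rw [he] at h
    rw [innerDegSum, Finset.card_univ, ← h]
    refine le_of_eq (Finset.sum_congr rfl fun u _ => ?_)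
    rw [← SimpleGraph.card_neighborFinset_eq_degree, SimpleGraph.neighborFinset_eq_filter]
  | succ q ih =>
    have hne : D ≠ Finset.univ := by rintro rfl; simp at hq
    obtain ⟨b, hb, v, hv, hbv⟩ := exists_adj_of_connected hU hD hne
    have hc : (insert v D)ᶜ.card = q := by
      rw [Finset.compl_insert, Finset.card_erase_of_mem (by simpa using hv), hq]
      rfl
    have h1 := ih (Finset.insert_nonempty v D) hc
    rw [innerDegSum_insert hv, Finset.card_insert_of_notMem hv] at h1
    have h2 : 0 < (D.filter (U.Adj v)).card :=
      Finset.card_pos.2 ⟨b, Finset.mem_filter.2 ⟨hb, hbv.symm⟩⟩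
    omega

theorem eq_of_adj_of_innerDegSum [Fintype V] (hU : U.Connected)
    (he : U.edgeSet.ncard = Fintype.card V) {D : Finset V}
    (hD : 2 * D.card ≤ innerDegSum U D) {v b b' : V} (hv : v ∉ D) (hb : b ∈ D) (hb' : b' ∈ D)
    (h : U.Adj v b) (h' : U.Adj v b') : b' = b := by
  classical
  have h1 := innerDegSum_le hU he (Finset.insert_nonempty v D)
  rw [innerDegSum_insert hv, Finset.card_insert_of_notMem hv] at h1
  have h2 : (D.filter (U.Adj v)).card ≤ 1 := by omega
  exact Finset.card_le_one.1 h2 b' (Finset.mem_filter.2 ⟨hb', h'⟩) b (Finset.mem_filter.2 ⟨hb, h⟩)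

theorem two_mul_card_insert_le [DecidableEq V] {D : Finset V}
    (hD : 2 * D.card ≤ innerDegSum U D) {v b : V} (hv : v ∉ D) (hb : b ∈ D) (h : U.Adj v b) :
    2 * (insert v D).card ≤ innerDegSum U (insert v D) := by
  classical
  have h2 : 0 < (D.filter (U.Adj v)).card :=
    Finset.card_pos.2 ⟨b, Finset.mem_filter.2 ⟨hb, h⟩⟩
  rw [innerDegSum_insert hv, Finset.card_insert_of_notMem hv]
  omega

theorem exists_inner_adj [Fintype V] (hU : U.Connected)
    (he : U.edgeSet.ncard = Fintype.card V) {D : Finset V}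
    (hD : 2 * D.card ≤ innerDegSum U D) {b : V} (hb : b ∈ D) : ∃ u ∈ D, U.Adj b u := by
  classical
  by_contra! hcon
  have h1 := innerDegSum_insert (U := U) (Finset.notMem_erase b D)
  have h0 : ((D.erase b).filter (U.Adj b)).card = 0 := by
    rw [Finset.card_eq_zero, Finset.filter_eq_empty_iff]
    exact fun u hu => hcon u (Finset.mem_of_mem_erase hu)
  rw [Finset.insert_erase hb, h0] at h1
  have hcard := Finset.card_erase_add_one hb
  rcases (D.erase b).eq_empty_or_nonempty with hemp | hne
  · have : innerDegSum U (D.erase b) = 0 := by rw [hemp]; simp [innerDegSum]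
    omega
  · have := innerDegSum_le hU he hne
    omega

/-- A cyclic enumeration of the vertices of a cycle of length `ℓ`. -/
structure IsCycleEnum (U : SimpleGraph V) (ℓ : ℕ) (c : ℕ → V) : Prop where
  three_le : 3 ≤ ℓ
  inj : ∀ i < ℓ, ∀ j < ℓ, c i = c j → i = j
  adj : ∀ i < ℓ, U.Adj (c i) (c (i + 1))
  close : c ℓ = c 0

theorem HasCycleOfLength.exists_enum {ℓ : ℕ} (h : HasCycleOfLength U ℓ) :
    ∃ c : ℕ → V, IsCycleEnum U ℓ c := by
  obtain ⟨v, c, hc, rfl⟩ := h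
  refine ⟨c.getVert, hc.three_le_length, fun i hi j hj hij => ?_, fun i hi => ?_, by simp⟩
  · refine hc.getVert_injOn' ?_ ?_ hij <;> simp <;> omega
  · exact c.adj_getVert_succ hi

open Classical in
/-- The set of the first `i` vertices of an enumeration. -/
noncomputable def prefixSet (c : ℕ → V) (i : ℕ) : Finset V := (Finset.range i).image c

theorem mem_prefixSet {c : ℕ → V} {i : ℕ} {v : V} : v ∈ prefixSet c i ↔ ∃ j < i, c j = v := by
  simp [prefixSet]

theorem prefixSet_succ [DecidableEq V] (c : ℕ → V) (i : ℕ) :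
    prefixSet c (i + 1) = insert (c i) (prefixSet c i) := by
  ext v
  simp only [mem_prefixSet, Finset.mem_insert, Nat.lt_succ_iff_lt_or_eq]
  grind

theorem IsCycleEnum.notMem_prefixSet {ℓ : ℕ} {c : ℕ → V} (hc : IsCycleEnum U ℓ c) {i j : ℕ}
    (hij : i ≤ j) (hj : j < ℓ) : c j ∉ prefixSet c i := by
  rw [mem_prefixSet]
  rintro ⟨k, hk, hck⟩
  have := hc.inj k (by omega) j hj hck
  omega

theorem IsCycleEnum.succ_mem {ℓ : ℕ} {c : ℕ → V} (hc : IsCycleEnum U ℓ c) {i : ℕ} (hi : i < ℓ) :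
    c (i + 1) ∈ prefixSet c ℓ := by
  have := hc.three_le
  rw [mem_prefixSet]
  by_cases h : i + 1 = ℓ
  · exact ⟨0, by omega, by rw [h, hc.close]⟩
  · exact ⟨i + 1, by omega, rfl⟩

theorem IsCycleEnum.pred_ne_succ {ℓ : ℕ} {c : ℕ → V} (hc : IsCycleEnum U ℓ c) {i : ℕ}
    (hi : i + 1 < ℓ) : c i ≠ c (i + 2) := by
  have := hc.three_le
  intro h
  by_cases h' : i + 2 = ℓ
  · rw [h', hc.close] at h
    have := hc.inj i (by omega) 0 (by omega) h
    omega
  · have := hc.inj i (by omega) (i + 2) (by omega) h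
    omega

theorem IsCycleEnum.exists_two_adj {ℓ : ℕ} {c : ℕ → V} (hc : IsCycleEnum U ℓ c) {u : V}
    (hu : u ∈ prefixSet c ℓ) :
    ∃ a ∈ prefixSet c ℓ, ∃ b ∈ prefixSet c ℓ, a ≠ b ∧ U.Adj u a ∧ U.Adj u b := by
  have h3 := hc.three_le
  obtain ⟨i, hi, rfl⟩ := mem_prefixSet.1 hu
  rcases i with _ | i
  · refine ⟨c 1, hc.succ_mem (by omega), c (ℓ - 1), mem_prefixSet.2 ⟨ℓ - 1, by omega, rfl⟩,
      fun h => ?_, hc.adj 0 (by omega), ?_⟩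
    · have := hc.inj 1 (by omega) (ℓ - 1) (by omega) h
      omega
    · have := hc.adj (ℓ - 1) (by omega)
      rw [Nat.sub_add_cancel (by omega), hc.close] at this
      exact this.symm
  · exact ⟨c i, mem_prefixSet.2 ⟨i, by omega, rfl⟩, c (i + 2), hc.succ_mem hi,
      hc.pred_ne_succ hi, (hc.adj i (by omega)).symm, hc.adj (i + 1) hi⟩

open Classical in
theorem IsCycleEnum.two_le_inner {ℓ : ℕ} {c : ℕ → V} (hc : IsCycleEnum U ℓ c) {u : V}
    (hu : u ∈ prefixSet c ℓ) : 2 ≤ ((prefixSet c ℓ).filter (U.Adj u)).card := by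
  obtain ⟨a, ha, b, hb, hab, hua, hub⟩ := hc.exists_two_adj hu
  exact Finset.one_lt_card.2 ⟨a, Finset.mem_filter.2 ⟨ha, hua⟩, b, Finset.mem_filter.2 ⟨hb, hub⟩,
    hab⟩

theorem IsCycleEnum.two_mul_card_le {ℓ : ℕ} {c : ℕ → V} (hc : IsCycleEnum U ℓ c) :
    2 * (prefixSet c ℓ).card ≤ innerDegSum U (prefixSet c ℓ) := by
  classical
  calc 2 * (prefixSet c ℓ).card = ∑ u ∈ prefixSet c ℓ, 2 := by simp [mul_comm]
    _ ≤ _ := Finset.sum_le_sum fun u hu => hc.two_le_inner hu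

theorem IsCycleEnum.eq_or_eq_of_adj [Fintype V] (hU : U.Connected)
    (he : U.edgeSet.ncard = Fintype.card V) {ℓ : ℕ} {c : ℕ → V} (hc : IsCycleEnum U ℓ c)
    {i : ℕ} (hi : i + 1 < ℓ) {u : V} (hu : u ∈ prefixSet c ℓ) (h : U.Adj (c (i + 1)) u) :
    u = c i ∨ u = c (i + 2) := by
  classical
  by_contra! hcon
  have hmem : c (i + 1) ∈ prefixSet c ℓ := hc.succ_mem (by omega)
  have h3 : 2 < ((prefixSet c ℓ).filter (U.Adj (c (i + 1)))).card := by
    rw [Finset.two_lt_card]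
    refine ⟨c i, ?_, c (i + 2), ?_, u, ?_, hc.pred_ne_succ hi, hcon.1.symm, hcon.2.symm⟩
    · exact Finset.mem_filter.2 ⟨mem_prefixSet.2 ⟨i, by omega, rfl⟩, (hc.adj i (by omega)).symm⟩
    · exact Finset.mem_filter.2 ⟨hc.succ_mem hi, hc.adj (i + 1) hi⟩
    · exact Finset.mem_filter.2 ⟨hu, h⟩
  have hlt : ∑ u ∈ prefixSet c ℓ, 2 < innerDegSum U (prefixSet c ℓ) :=
    Finset.sum_lt_sum (fun u hu => hc.two_le_inner hu) ⟨_, hmem, h3⟩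
  have hle := innerDegSum_le hU he ⟨_, hmem⟩
  simp at hlt
  omega

end Unicyclic

/-- `PastTree m g h P w V`: the neighbourhood of `w` in `g` outside `P` starts, down to depth `h`,
as an `m`-ary tree whose vertices lie in `V` and have no further neighbours. -/
inductive PastTree (m : ℕ) (g : SimpleGraph ℕ) : ℕ → Set ℕ → ℕ → Finset ℕ → Prop
  | leaf {P : Set ℕ} {w : ℕ} {V : Finset ℕ} : w ∈ V → PastTree m g 0 P w V
  | node {h : ℕ} {P : Set ℕ} {w : ℕ} {V : Finset ℕ} (C : Finset ℕ) (W : ℕ → Finset ℕ) :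
      w ∈ V → C.card = m → g.neighborSet w = P ∪ C → (∀ c ∈ C, W c ⊆ V) → (∀ c ∈ C, w ∉ W c) →
      (∀ c ∈ C, ∀ c' ∈ C, c ≠ c' → Disjoint (W c) (W c')) →
      (∀ c ∈ C, PastTree m g h {w} c (W c)) → PastTree m g (h + 1) P w V

namespace PastTree

variable {m h : ℕ} {g g' : SimpleGraph ℕ} {P : Set ℕ} {w : ℕ} {V : Finset ℕ}

theorem root_mem (hT : PastTree m g h P w V) : w ∈ V := by
  cases hT <;> assumption

theorem pred (hT : PastTree m g (h + 1) P w V) : PastTree m g h P w V := by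
  induction h generalizing P w V with
  | zero => exact .leaf hT.root_mem
  | succ h ih =>
    obtain _ | ⟨C, W, h1, h2, h3, h4, h5, h6, h7⟩ := hT
    exact .node C W h1 h2 h3 h4 h5 h6 fun c hc => ih (h7 c hc)

theorem of_le {h' : ℕ} (hT : PastTree m g h P w V) (hle : h' ≤ h) : PastTree m g h' P w V := by
  induction hle with
  | refl => exact hT
  | step _ ih => exact ih hT.pred

theorem congr (hT : PastTree m g h P w V)
    (hg : ∀ v ∈ V, g'.neighborSet v = g.neighborSet v) : PastTree m g' h P w V := by
  induction hT with
  | leaf h => exact .leaf h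
  | node C W h1 h2 h3 h4 h5 h6 _ ih =>
    exact .node C W h1 h2 ((hg _ h1).trans h3) h4 h5 h6
      fun c hc => ih c hc fun v hv => hg v (h4 c hc hv)

theorem insert_parent {x : ℕ} (hT : PastTree m g h ∅ w V)
    (hw : g'.neighborSet w = insert x (g.neighborSet w))
    (hg : ∀ v ∈ V, v ≠ w → g'.neighborSet v = g.neighborSet v) : PastTree m g' h {x} w V := by
  obtain h1 | ⟨C, W, h1, h2, h3, h4, h5, h6, h7⟩ := hT
  · exact .leaf h1
  · refine .node C W h1 h2 ?_ h4 h5 h6 fun c hc => (h7 c hc).congr fun v hv => hg v (h4 c hc hv) ?_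
    · rw [hw, h3, Set.empty_union, Set.singleton_union]
    · rintro rfl
      exact h5 c hc hv

end PastTree

/-- An embedding of the subgraph of `U` induced on `D` into `g`, such that the further neighbours
of the images of the non-leaf vertices of `D` are the roots of the past trees listed in `I`, which
are disjoint, avoid the image of `D` and have depth at least `h`. -/
structure PartialCopy {V : Type*} (m : ℕ) (g : SimpleGraph ℕ) (U : SimpleGraph V) (h : ℕ)
    (D : Finset V) (φ : V → ℕ) (I : Set (V × ℕ × Finset ℕ)) (X : Finset ℕ) : Prop where
  inj : Set.InjOn φ D
  adj : ∀ u ∈ D, ∀ v ∈ D, U.Adj u v → g.Adj (φ u) (φ v)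
  maps : ∀ u ∈ D, φ u ∈ X
  item : ∀ b r W, (b, r, W) ∈ I → b ∈ D ∧ PastTree m g h {φ b} r W ∧ W ⊆ X ∧ ∀ u ∈ D, φ u ∉ W
  disj : ∀ p ∈ I, ∀ q ∈ I, p ≠ q → Disjoint p.2.2 q.2.2
  nbr : ∀ u ∈ D, 2 ≤ (U.neighborSet u).ncard →
    g.neighborSet (φ u) = φ '' {v | v ∈ D ∧ U.Adj u v} ∪ {r | ∃ W, (u, r, W) ∈ I}

namespace PartialCopy

variable {V : Type*} {m n h d : ℕ} {g : SimpleGraph ℕ} {U : SimpleGraph V}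
  {D : Finset V} {φ : V → ℕ} {I : Set (V × ℕ × Finset ℕ)} {X : Finset ℕ}

theorem closed_restrict (hs : PartialCopy m g U h D φ ∅ X) (h' : ℕ) :
    PartialCopy m g U h' D φ ∅ (D.image φ) where
  inj := hs.inj
  adj := hs.adj
  maps := fun u hu => Finset.mem_image_of_mem _ hu
  item := by simp
  disj := by simp
  nbr := hs.nbr

theorem expand [DecidableEq V] (hs : PartialCopy m g U (h + 1) D φ I X) {b v : V} {r : ℕ}
    {W : Finset ℕ}
    (hI : (b, r, W) ∈ I) (hv : v ∉ D) (hvb : U.Adj v b)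
    (huniq : ∀ u ∈ D, U.Adj v u → u = b) :
    ∃ I', PartialCopy m g U h (insert v D) (Function.update φ v r) I' X ∧
      (m ≠ 0 → ∃ r' W', (v, r', W') ∈ I') ∧ graphDeg g r ≤ m + 1 := by
  obtain ⟨hb, hT, hWX, hφW⟩ := hs.item b r W hI
  have hrW := hT.root_mem
  obtain _ | ⟨C, W', -, hC, hN, hsub, hrW', hdis, hch⟩ := hT
  have hup : ∀ u ∈ D, Function.update φ v r u = φ u := fun u hu =>
    Function.update_of_ne (ne_of_mem_of_not_mem hu hv) _ _
  have hupv : Function.update φ v r v = r := Function.update_self ..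
  refine ⟨(I \ {(b, r, W)}) ∪ {p | ∃ c ∈ C, p = (v, c, W' c)}, ⟨?_, ?_, ?_, ?_, ?_, ?_⟩, ?_, ?_⟩
  · rw [Finset.coe_insert, Set.injOn_insert (by simpa using hv)]
    refine ⟨fun x hx y hy hxy => hs.inj hx hy (by rwa [hup x hx, hup y hy] at hxy), ?_⟩
    rintro ⟨u, hu, hur⟩
    rw [hup u hu, hupv] at hur
    exact hφW u hu (hur ▸ hrW)
  · have key : ∀ u ∈ D, U.Adj v u → g.Adj r (φ u) := by
      intro u hu huv
      have : φ u ∈ g.neighborSet r := by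
        rw [hN, huniq u hu huv]; simp
      exact this
    intro u hu u' hu' huu'
    rcases Finset.mem_insert.1 hu with rfl | hu1
    · rcases Finset.mem_insert.1 hu' with rfl | hu2
      · exact absurd huu' (U.loopless.irrefl _)
      · rw [hupv, hup u' hu2]; exact key u' hu2 huu'
    · rcases Finset.mem_insert.1 hu' with rfl | hu2
      · rw [hupv, hup u hu1]; exact (key u hu1 huu'.symm).symm
      · rw [hup u hu1, hup u' hu2]; exact hs.adj u hu1 u' hu2 huu'
  · intro u hu
    rcases Finset.mem_insert.1 hu with rfl | hu
    · rw [hupv]; exact hWX hrW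
    · rw [hup u hu]; exact hs.maps u hu
  · rintro b' r' W'' (⟨h1, h2⟩ | ⟨c, hc, hcc⟩)
    · obtain ⟨k1, k2, k3, k4⟩ := hs.item b' r' W'' h1
      refine ⟨Finset.mem_insert_of_mem k1, ?_, k3, fun u hu => ?_⟩
      · rw [hup b' k1]; exact k2.pred
      · rcases Finset.mem_insert.1 hu with rfl | hu
        · rw [hupv]
          exact fun hr => Finset.disjoint_left.1 (hs.disj _ h1 _ hI h2) hr hrW
        · rw [hup u hu]; exact k4 u hu
    · simp only [Prod.mk.injEq] at hcc
      obtain ⟨rfl, rfl, rfl⟩ := hcc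
      refine ⟨Finset.mem_insert_self _ _, ?_, (hsub _ hc).trans hWX, fun u hu => ?_⟩
      · rw [hupv]; exact hch _ hc
      · rcases Finset.mem_insert.1 hu with rfl | hu
        · rw [hupv]; exact hrW' _ hc
        · rw [hup u hu]; exact fun hh => hφW u hu (hsub _ hc hh)
  · rintro p (⟨h1, h2⟩ | ⟨c, hc, rfl⟩) q (⟨h3, h4⟩ | ⟨c', hc', rfl⟩) hpq
    · exact hs.disj p h1 q h3 hpq
    · exact (hs.disj p h1 _ hI h2).mono_right (hsub c' hc')
    · exact ((hs.disj q h3 _ hI h4).mono_right (hsub c hc)).symm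
    · exact hdis c hc c' hc' (by rintro rfl; exact hpq rfl)
  · intro u hu hdeg
    rcases Finset.mem_insert.1 hu with rfl | hu1
    · rw [hupv, hN]
      congr 1
      · ext x
        simp only [Set.mem_singleton_iff, Set.mem_image, Set.mem_ofPred_eq]
        constructor
        · rintro rfl
          exact ⟨b, ⟨Finset.mem_insert_of_mem hb, hvb⟩, hup b hb⟩
        · rintro ⟨y, ⟨hy, hy'⟩, rfl⟩
          rcases Finset.mem_insert.1 hy with rfl | hy
          · exact absurd hy' (U.loopless.irrefl _)
          · rw [hup y hy, huniq y hy hy']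
      · ext x
        simp only [Set.mem_ofPred_eq, Set.mem_union, Finset.mem_coe]
        constructor
        · exact fun hx => ⟨_, Or.inr ⟨x, hx, rfl⟩⟩
        · rintro ⟨W'', ⟨h1, -⟩ | ⟨c, hc, hcc⟩⟩
          · exact absurd (hs.item _ _ _ h1).1 hv
          · simp only [Prod.mk.injEq] at hcc
            rw [hcc.2.1]; exact hc
    · have huv : u ≠ v := ne_of_mem_of_not_mem hu1 hv
      rw [hup u hu1, hs.nbr u hu1 hdeg]
      ext x
      simp only [Set.mem_union, Set.mem_image, Set.mem_ofPred_eq]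
      constructor
      · rintro (⟨y, ⟨hy, hy'⟩, rfl⟩ | ⟨W'', hW''⟩)
        · exact Or.inl ⟨y, ⟨Finset.mem_insert_of_mem hy, hy'⟩, hup y hy⟩
        · by_cases he : (u, x, W'') = (b, r, W)
          · simp only [Prod.mk.injEq] at he
            obtain ⟨rfl, rfl, rfl⟩ := he
            exact Or.inl ⟨v, ⟨Finset.mem_insert_self _ _, hvb.symm⟩, hupv⟩
          · exact Or.inr ⟨W'', Or.inl ⟨hW'', he⟩⟩
      · rintro (⟨y, ⟨hy, hy'⟩, rfl⟩ | ⟨W'', ⟨h1, -⟩ | ⟨c, hc, hcc⟩⟩)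
        · rcases Finset.mem_insert.1 hy with rfl | hy
          · rw [hupv]
            rw [huniq u hu1 hy'.symm]
            exact Or.inr ⟨W, hI⟩
          · exact Or.inl ⟨y, ⟨hy, hy'⟩, (hup y hy).symm⟩
        · exact Or.inr ⟨W'', h1⟩
        · simp only [Prod.mk.injEq] at hcc
          exact absurd hcc.1 huv
  · intro hm
    obtain ⟨c, hc⟩ := Finset.card_pos.1 (by omega : 0 < C.card)
    exact ⟨c, W' c, Or.inr ⟨c, hc, rfl⟩⟩
  · rw [graphDeg, hN, ← Finset.coe_singleton, ← Finset.coe_union, Set.ncard_coe_finset]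
    refine (Finset.card_union_le _ _).trans ?_
    simp [hC, add_comm]

end PartialCopy

/-- A family of disjoint past trees of depth `h` in `[n]`, each with at most `K` vertices and
rooted at a vertex of degree less than `d`. -/
structure TreeFamily (m d n : ℕ) (g : SimpleGraph ℕ) (h K : ℕ) (F : Finset (ℕ × Finset ℕ)) :
    Prop where
  tree : ∀ p ∈ F, PastTree m g h ∅ p.1 p.2
  sub : ∀ p ∈ F, p.2 ⊆ Finset.Icc 1 n
  low : ∀ p ∈ F, p.1 ∈ lowDegSet d g n
  card_le : ∀ p ∈ F, p.2.card ≤ K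
  disj : ∀ p ∈ F, ∀ q ∈ F, p ≠ q → Disjoint p.2 q.2

namespace TreeFamily

variable {m d n h K : ℕ} {g : SimpleGraph ℕ} {F F' : Finset (ℕ × Finset ℕ)}

theorem root_mem (hF : TreeFamily m d n g h K F) {p : ℕ × Finset ℕ} (hp : p ∈ F) : p.1 ∈ p.2 :=
  (hF.tree p hp).root_mem

theorem mono (hF : TreeFamily m d n g h K F) (hFF : F' ⊆ F) : TreeFamily m d n g h K F' where
  tree := fun p hp => hF.tree p (hFF hp)
  sub := fun p hp => hF.sub p (hFF hp)
  low := fun p hp => hF.low p (hFF hp)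
  card_le := fun p hp => hF.card_le p (hFF hp)
  disj := fun p hp q hq => hF.disj p (hFF hp) q (hFF hq)

theorem eq_of_mem (hF : TreeFamily m d n g h K F) {p q : ℕ × Finset ℕ} (hp : p ∈ F) (hq : q ∈ F)
    {x : ℕ} (hxp : x ∈ p.2) (hxq : x ∈ q.2) : p = q :=
  by_contra fun hne => Finset.disjoint_left.1 (hF.disj p hp q hq hne) hxp hxq

theorem injOn_root (hF : TreeFamily m d n g h K F) : Set.InjOn Prod.fst (F : Set (ℕ × Finset ℕ)) :=
  fun _ hp _ hq hpq => hF.eq_of_mem hp hq (hF.root_mem hp) (hpq ▸ hF.root_mem hq)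

end TreeFamily

namespace PartialCopy

variable {V : Type*} {m n h d : ℕ} {g : SimpleGraph ℕ} {U : SimpleGraph V}
  {D : Finset V} {φ : V → ℕ} {I : Set (V × ℕ × Finset ℕ)} {X : Finset ℕ}

theorem exists_adj_notMem (hs : PartialCopy m g U h D φ I X)
    (hfin : ∀ v, (g.neighborSet v).Finite)
    (hdeg : ∀ v, graphDeg g v ≤ d) (hcomp : UnicyclicComplete U d) {b : V} {r : ℕ} {W : Finset ℕ}
    (hI : (b, r, W) ∈ I) (hb : 2 ≤ (U.neighborSet b).ncard) : ∃ v ∉ D, U.Adj b v := by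
  by_contra! hcon
  obtain ⟨hbD, hT, -, hφ⟩ := hs.item b r W hI
  have hN := hs.nbr b hbD hb
  have hset : {v | v ∈ D ∧ U.Adj b v} = U.neighborSet b := by
    ext v
    exact ⟨fun h => h.2, fun h => ⟨by_contra fun hv => hcon v hv h, h⟩⟩
  have hsub : insert r (φ '' U.neighborSet b) ⊆ g.neighborSet (φ b) := by
    rw [hN, hset]
    rintro x (rfl | hx)
    · exact Or.inr ⟨W, hI⟩
    · exact Or.inl hx
  have h1 := Set.ncard_le_ncard hsub (hfin _)
  have hinj : Set.InjOn φ (U.neighborSet b) := by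
    rw [← hset]
    exact hs.inj.mono fun v hv => hv.1
  rw [Set.ncard_insert_of_notMem _ ((hfin _).subset ((Set.subset_insert _ _).trans hsub)),
    hinj.ncard_image, hcomp b hb] at h1
  · have := hdeg (φ b)
    rw [graphDeg] at this
    omega
  · rintro ⟨u, hu, rfl⟩
    rw [← hset] at hu
    exact hφ u hu.1 hT.root_mem

theorem close (hs : PartialCopy m g U h D φ I X)
    (hI : ¬ ∃ b r W, (b, r, W) ∈ I ∧ 2 ≤ (U.neighborSet b).ncard) :
    PartialCopy m g U 0 D φ ∅ (D.image φ) where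
  inj := hs.inj
  adj := hs.adj
  maps := fun u hu => Finset.mem_image_of_mem _ hu
  item := by simp
  disj := by simp
  nbr := by
    intro u hu hdeg
    rw [hs.nbr u hu hdeg]
    congr 1
    ext r
    simp only [Set.mem_ofPred_eq, Set.mem_empty_iff_false, exists_false, iff_false, not_exists]
    exact fun W hW => hI ⟨u, r, W, hW, hdeg⟩

theorem eliminate [Fintype V] [DecidableEq V] (hU : U.Connected)
    (he : U.edgeSet.ncard = Fintype.card V) (hcomp : UnicyclicComplete U d)
    (hfin : ∀ v, (g.neighborSet v).Finite) (hdeg : ∀ v, graphDeg g v ≤ d)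
    (hs : PartialCopy m g U h D φ I X) (hh : Dᶜ.card ≤ h)
    (hD : 2 * D.card ≤ innerDegSum U D) :
    ∃ D' φ', D ⊆ D' ∧ (∀ u ∈ D, φ' u = φ u) ∧ 2 * D'.card ≤ innerDegSum U D' ∧
      PartialCopy m g U 0 D' φ' ∅ (D'.image φ') := by
  by_cases hex : ∃ b r W, (b, r, W) ∈ I ∧ 2 ≤ (U.neighborSet b).ncard
  · induction h generalizing D φ I with
    | zero =>
      obtain ⟨b, r, W, hI, hb⟩ := hex
      obtain ⟨v, hv, -⟩ := hs.exists_adj_notMem hfin hdeg hcomp hI hb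
      have : v ∈ Dᶜ := by simpa using hv
      rw [Finset.card_eq_zero.1 (by omega : Dᶜ.card = 0)] at this
      simp at this
    | succ h ih =>
      obtain ⟨b, r, W, hI, hb⟩ := hex
      obtain ⟨v, hv, hbv⟩ := hs.exists_adj_notMem hfin hdeg hcomp hI hb
      have hbD := (hs.item b r W hI).1
      obtain ⟨I', hs', -⟩ := hs.expand hI hv hbv.symm
        fun u hu hvu => eq_of_adj_of_innerDegSum hU he hD hv hbD hu hbv.symm hvu
      have hD' := two_mul_card_insert_le hD hv hbD hbv.symm
      have hup : ∀ u ∈ D, Function.update φ v r u = φ u := fun u hu =>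
        Function.update_of_ne (ne_of_mem_of_not_mem hu hv) _ _
      have hc : (insert v D)ᶜ.card ≤ h := by
        rw [Finset.compl_insert, Finset.card_erase_of_mem (by simpa using hv)]
        omega
      by_cases hex' : ∃ b r W, (b, r, W) ∈ I' ∧ 2 ≤ (U.neighborSet b).ncard
      · obtain ⟨D', φ', h1, h2, h3, h4⟩ := ih hs' hc hD' hex'
        exact ⟨D', φ', (Finset.subset_insert _ _).trans h1,
          fun u hu => (h2 u (Finset.mem_insert_of_mem hu)).trans (hup u hu), h3, h4⟩
      · exact ⟨insert v D, Function.update φ v r, Finset.subset_insert _ _, hup, hD',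
          hs'.close hex'⟩
  · exact ⟨D, φ, subset_rfl, fun _ _ => rfl, hD, hs.close hex⟩

theorem attach [DecidableEq V] {K : ℕ} (hs : PartialCopy m g U h D φ I X)
    (hg : SupportedOn n g) (hX : X ⊆ Finset.Icc 1 n) {J : Finset (ℕ × Finset ℕ)}
    (hJ : TreeFamily m d n g h K J) (hJX : ∀ p ∈ J, Disjoint p.2 X) {v : V} (hv : v ∉ D)
    {A : Finset V} (hA : ∀ u, u ∈ A ↔ u ∈ D ∧ U.Adj v u) {S : Finset ℕ}
    (hS : S = A.image φ ∪ J.image Prod.fst) :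
    ∃ I', PartialCopy m (attachStep g (n + 1) S) U h (insert v D) (Function.update φ v (n + 1)) I'
      (Finset.Icc 1 (n + 1)) := by
  have hSn : S ⊆ Finset.Icc 1 n := by
    rw [hS]
    refine Finset.union_subset ?_ ?_
    · rintro x hx
      obtain ⟨u, hu, rfl⟩ := Finset.mem_image.1 hx
      exact hX (hs.maps u ((hA u).1 hu).1)
    · rintro x hx
      obtain ⟨p, hp, rfl⟩ := Finset.mem_image.1 hx
      exact hJ.sub p hp (hJ.root_mem hp)
  have hup : ∀ u ∈ D, Function.update φ v (n + 1) u = φ u := fun u hu =>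
    Function.update_of_ne (ne_of_mem_of_not_mem hu hv) _ _
  have hupv : Function.update φ v (n + 1) v = n + 1 := Function.update_self ..
  have hnot : ∀ x ∈ Finset.Icc 1 n, x ≠ n + 1 := by
    intro x hx
    have := Finset.mem_Icc.1 hx
    omega
  have hIcc : Finset.Icc 1 n ⊆ Finset.Icc 1 (n + 1) := Finset.Icc_subset_Icc_right (by omega)
  have hmemX : ∀ x ∈ X, x ∈ S ↔ ∃ u ∈ A, φ u = x := by
    intro x hx
    rw [hS, Finset.mem_union, Finset.mem_image, Finset.mem_image]
    refine ⟨?_, Or.inl⟩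
    rintro (hh | ⟨p, hp, rfl⟩)
    · exact hh
    · exact absurd hx (Finset.disjoint_left.1 (hJX p hp) (hJ.root_mem hp))
  have hmemφ : ∀ u ∈ D, φ u ∈ S ↔ U.Adj v u := by
    intro u hu
    rw [hmemX _ (hs.maps u hu)]
    constructor
    · rintro ⟨u', hu', he⟩
      have := (hA u').1 hu'
      rw [hs.inj this.1 hu he] at this
      exact this.2
    · exact fun hvu => ⟨u, (hA u).2 ⟨hu, hvu⟩, rfl⟩
  refine ⟨I ∪ {p | ∃ q ∈ J, p = (v, q)}, ⟨?_, ?_, ?_, ?_, ?_, ?_⟩⟩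
  · rw [Finset.coe_insert, Set.injOn_insert (by simpa using hv)]
    refine ⟨fun x hx y hy hxy => hs.inj hx hy (by rwa [hup x hx, hup y hy] at hxy), ?_⟩
    rintro ⟨u, hu, hur⟩
    rw [hup u hu, hupv] at hur
    exact hnot _ (hX (hs.maps u hu)) hur
  · have key : ∀ u ∈ D, U.Adj v u → (attachStep g (n + 1) S).Adj (n + 1) (φ u) := by
      intro u hu huv
      have : φ u ∈ (attachStep g (n + 1) S).neighborSet (n + 1) := by
        rw [neighborSet_attachStep_new hg hSn]
        exact (hmemφ u hu).2 huv
      exact this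
    intro u hu u' hu' huu'
    rcases Finset.mem_insert.1 hu with rfl | hu1
    · rcases Finset.mem_insert.1 hu' with rfl | hu2
      · exact absurd huu' (U.loopless.irrefl _)
      · rw [hupv, hup u' hu2]; exact key u' hu2 huu'
    · rcases Finset.mem_insert.1 hu' with rfl | hu2
      · rw [hupv, hup u hu1]; exact (key u hu1 huu'.symm).symm
      · rw [hup u hu1, hup u' hu2]; exact le_attachStep _ _ _ (hs.adj u hu1 u' hu2 huu')
  · intro u hu
    rcases Finset.mem_insert.1 hu with rfl | hu1
    · rw [hupv]; simp
    · rw [hup u hu1]; exact hIcc (hX (hs.maps u hu1))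
  · rintro b r W (hI | ⟨q, hq, hqq⟩)
    · obtain ⟨k1, k2, k3, k4⟩ := hs.item b r W hI
      refine ⟨Finset.mem_insert_of_mem k1, ?_, k3.trans (hX.trans hIcc), fun u hu => ?_⟩
      · rw [hup b k1]
        refine k2.congr fun x hx => neighborSet_attachStep_of_notMem ?_ (hnot _ (hX (k3 hx)))
        rw [hmemX x (k3 hx)]
        rintro ⟨u, hu, rfl⟩
        exact k4 u ((hA u).1 hu).1 hx
      · rcases Finset.mem_insert.1 hu with rfl | hu1
        · rw [hupv]
          exact fun hx => hnot _ (hX (k3 hx)) rfl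
        · rw [hup u hu1]; exact k4 u hu1
    · simp only [Prod.mk.injEq] at hqq
      obtain ⟨rfl, rfl⟩ := hqq
      have hqS : r ∈ S := by
        rw [hS, Finset.mem_union]
        exact Or.inr (Finset.mem_image_of_mem Prod.fst hq)
      refine ⟨Finset.mem_insert_self _ _, ?_, (hJ.sub _ hq).trans hIcc, fun u hu => ?_⟩
      · rw [hupv]
        refine (hJ.tree _ hq).insert_parent (neighborSet_attachStep_of_mem hSn hqS)
          fun x hx hxr => neighborSet_attachStep_of_notMem ?_ (hnot _ (hJ.sub _ hq hx))
        rw [hS, Finset.mem_union, Finset.mem_image, Finset.mem_image]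
        rintro (⟨u, hu, rfl⟩ | ⟨p, hp, rfl⟩)
        · exact Finset.disjoint_left.1 (hJX _ hq) hx (hs.maps u ((hA u).1 hu).1)
        · exact hxr (by rw [hJ.eq_of_mem hp hq (hJ.root_mem hp) hx])
      · rcases Finset.mem_insert.1 hu with rfl | hu1
        · rw [hupv]
          exact fun hx => hnot _ (hJ.sub _ hq hx) rfl
        · rw [hup u hu1]
          exact fun hx => Finset.disjoint_left.1 (hJX _ hq) hx (hs.maps u hu1)
  · rintro p (h1 | ⟨c, hc, rfl⟩) q (h3 | ⟨c', hc', rfl⟩) hpq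
    · exact hs.disj p h1 q h3 hpq
    · obtain ⟨b, r, W⟩ := p
      exact ((hJX c' hc').mono_right (hs.item b r W h1).2.2.1).symm
    · obtain ⟨b, r, W⟩ := q
      exact (hJX c hc).mono_right (hs.item b r W h3).2.2.1
    · exact hJ.disj c hc c' hc' (by rintro rfl; exact hpq rfl)
  · intro u hu hdeg
    rcases Finset.mem_insert.1 hu with rfl | hu1
    · rw [hupv, neighborSet_attachStep_new hg hSn, hS]
      ext x
      simp only [Finset.coe_union, Finset.coe_image, Set.mem_union, Set.mem_image, Finset.mem_coe,
        Set.mem_ofPred_eq]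
      constructor
      · rintro (⟨y, hy, rfl⟩ | ⟨p, hp, rfl⟩)
        · have := (hA y).1 hy
          exact Or.inl ⟨y, ⟨Finset.mem_insert_of_mem this.1, this.2⟩, hup y this.1⟩
        · exact Or.inr ⟨p.2, Or.inr ⟨p, hp, rfl⟩⟩
      · rintro (⟨y, ⟨hy, hy'⟩, rfl⟩ | ⟨W, hW | ⟨q, hq, hqq⟩⟩)
        · rcases Finset.mem_insert.1 hy with rfl | hy1
          · exact absurd hy' (U.loopless.irrefl _)
          · exact Or.inl ⟨y, (hA y).2 ⟨hy1, hy'⟩, (hup y hy1).symm⟩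
        · exact absurd (hs.item _ _ _ hW).1 hv
        · simp only [Prod.mk.injEq] at hqq
          exact Or.inr ⟨q, hq, by rw [← hqq.2]⟩
    · have hitems : ∀ x W, (u, x, W) ∈ I ∪ {p | ∃ q ∈ J, p = (v, q)} ↔ (u, x, W) ∈ I := by
        intro x W
        refine ⟨?_, Or.inl⟩
        rintro (hh | ⟨q, -, hqq⟩)
        · exact hh
        · simp only [Prod.mk.injEq] at hqq
          exact absurd (hqq.1 ▸ hu1) hv
      simp only [hitems]
      rw [hup u hu1]
      by_cases huv : U.Adj v u
      · rw [neighborSet_attachStep_of_mem hSn ((hmemφ u hu1).2 huv), hs.nbr u hu1 hdeg,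
          ← Set.insert_union]
        congr 1
        ext x
        simp only [Set.mem_insert_iff, Set.mem_image, Set.mem_ofPred_eq]
        constructor
        · rintro (rfl | ⟨y, ⟨hy, hy'⟩, rfl⟩)
          · exact ⟨v, ⟨Finset.mem_insert_self _ _, huv.symm⟩, hupv⟩
          · exact ⟨y, ⟨Finset.mem_insert_of_mem hy, hy'⟩, hup y hy⟩
        · rintro ⟨y, ⟨hy, hy'⟩, rfl⟩
          rcases Finset.mem_insert.1 hy with rfl | hy1
          · exact Or.inl hupv
          · exact Or.inr ⟨y, ⟨hy1, hy'⟩, (hup y hy1).symm⟩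
      · rw [neighborSet_attachStep_of_notMem (fun hh => huv ((hmemφ u hu1).1 hh))
          (hnot _ (hX (hs.maps u hu1))), hs.nbr u hu1 hdeg]
        congr 1
        ext x
        simp only [Set.mem_image, Set.mem_ofPred_eq]
        constructor
        · rintro ⟨y, ⟨hy, hy'⟩, rfl⟩
          exact ⟨y, ⟨Finset.mem_insert_of_mem hy, hy'⟩, hup y hy⟩
        · rintro ⟨y, ⟨hy, hy'⟩, rfl⟩
          rcases Finset.mem_insert.1 hy with rfl | hy1
          · exact absurd hy'.symm huv
          · exact ⟨y, ⟨hy1, hy'⟩, (hup y hy1).symm⟩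

theorem attachStep_of_disjoint (hs : PartialCopy m g U h D φ ∅ X) (hX : X ⊆ Finset.Icc 1 n)
    {S : Finset ℕ} (hSX : Disjoint S X) : PartialCopy m (attachStep g (n + 1) S) U h D φ ∅ X where
  inj := hs.inj
  adj := fun u hu v hv huv => le_attachStep _ _ _ (hs.adj u hu v hv huv)
  maps := hs.maps
  item := by simp
  disj := by simp
  nbr := by
    intro u hu hdeg
    have hx := hs.maps u hu
    rw [neighborSet_attachStep_of_notMem (fun h => Finset.disjoint_left.1 hSX h hx),
      hs.nbr u hu hdeg]
    have := Finset.mem_Icc.1 (hX hx)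
    omega

theorem exists_spine [Fintype V] [DecidableEq V] (hm : m ≠ 0) (hU : U.Connected)
    (he : U.edgeSet.ncard = Fintype.card V) {ℓ : ℕ} {c : ℕ → V} (hc : IsCycleEnum U ℓ c)
    {w : ℕ} {W : Finset ℕ} (i : ℕ) (hi : i + 1 < ℓ) (hT : PastTree m g (h + (i + 1)) ∅ w W) :
    ∃ φ I, PartialCopy m g U h (prefixSet c (i + 1)) φ I W ∧ φ (c 0) = w ∧
      (∃ r W', (c i, r, W') ∈ I) ∧ graphDeg g (φ (c i)) ≤ m + 1 := by
  induction i generalizing h with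
  | zero =>
    have hw := hT.root_mem
    obtain _ | ⟨C, W', -, hC, hN, hsub, hwW, hdis, hch⟩ := hT
    refine ⟨fun _ => w, {p | ∃ x ∈ C, p = (c 0, x, W' x)}, ⟨?_, ?_, ?_, ?_, ?_, ?_⟩, rfl, ?_, ?_⟩
    · intro u hu v hv _
      simp only [zero_add, Finset.mem_coe, mem_prefixSet, Nat.lt_one_iff] at hu hv
      obtain ⟨_, rfl, rfl⟩ := hu
      obtain ⟨_, rfl, rfl⟩ := hv
      rfl
    · intro u hu v hv huv
      simp only [zero_add, mem_prefixSet, Nat.lt_one_iff] at hu hv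
      obtain ⟨_, rfl, rfl⟩ := hu
      obtain ⟨_, rfl, rfl⟩ := hv
      exact absurd huv (U.loopless.irrefl _)
    · exact fun _ _ => hw
    · rintro b r W'' ⟨x, hx, hxx⟩
      simp only [Prod.mk.injEq] at hxx
      obtain ⟨rfl, rfl, rfl⟩ := hxx
      exact ⟨mem_prefixSet.2 ⟨0, by omega, rfl⟩, hch _ hx, hsub _ hx, fun _ _ => hwW _ hx⟩
    · rintro p ⟨x, hx, rfl⟩ q ⟨y, hy, rfl⟩ hpq
      exact hdis x hx y hy (by rintro rfl; exact hpq rfl)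
    · intro u hu _
      simp only [zero_add, mem_prefixSet, Nat.lt_one_iff] at hu
      obtain ⟨_, rfl, rfl⟩ := hu
      rw [hN]
      congr 1
      · rw [eq_comm, Set.image_eq_empty, Set.eq_empty_iff_forall_notMem]
        rintro v ⟨hv, hvv⟩
        simp only [zero_add, mem_prefixSet, Nat.lt_one_iff] at hv
        obtain ⟨_, rfl, rfl⟩ := hv
        exact U.loopless.irrefl _ hvv
      · ext x
        simp only [Finset.mem_coe, Set.mem_ofPred_eq, Prod.mk.injEq]
        grind
    · obtain ⟨x, hx⟩ := Finset.card_pos.1 (by omega : 0 < C.card)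
      exact ⟨x, W' x, x, hx, rfl⟩
    · rw [graphDeg, hN, Set.empty_union, Set.ncard_coe_finset]
      omega
  | succ i ih =>
    obtain ⟨φ, I, hs, h0, ⟨r, W', hI⟩, -⟩ := ih (h := h + 1) (by omega)
      (by rwa [show h + 1 + (i + 1) = h + (i + 1 + 1) by ring])
    have hv := hc.notMem_prefixSet (le_refl (i + 1)) (by omega)
    obtain ⟨I', hs', hex, hdeg⟩ := hs.expand hI hv (hc.adj i (by omega)).symm (by
      intro u hu hvu
      have hu' : u ∈ prefixSet c ℓ := by
        obtain ⟨j, hj, rfl⟩ := mem_prefixSet.1 hu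
        exact mem_prefixSet.2 ⟨j, by omega, rfl⟩
      rcases hc.eq_or_eq_of_adj hU he (by omega) hu' hvu with h | rfl
      · exact h
      · exact absurd hu (hc.notMem_prefixSet (by omega) hi))
    refine ⟨_, I', by rw [prefixSet_succ]; exact hs', ?_, hex hm, ?_⟩
    · rw [Function.update_of_ne, h0]
      intro hcc
      have := hc.inj 0 (by omega) (i + 1) (by omega) hcc
      omega
    · rwa [Function.update_self]

end PartialCopy

section Copies

/-- The copies of `U` in `g`, as subgraphs of the complete graph on `ℕ`. -/
def copySet {V : Type*} (g : SimpleGraph ℕ) (U : SimpleGraph V) :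
    Set (⊤ : SimpleGraph ℕ).Subgraph :=
  {H | (∀ a b, H.Adj a b → g.Adj a b) ∧ Nonempty (U ≃g H.coe)}

theorem copySet_mono {V : Type*} {g g' : SimpleGraph ℕ} (h : g ≤ g') (U : SimpleGraph V) :
    copySet g U ⊆ copySet g' U := fun _ hH => ⟨fun a b hab => h (hH.1 a b hab), hH.2⟩

theorem verts_subset_of_mem_copySet {V : Type*} {n : ℕ} {g : SimpleGraph ℕ} {U : SimpleGraph V}
    (hg : SupportedOn n g) (hU : ∀ u, ∃ v, U.Adj u v) {H : (⊤ : SimpleGraph ℕ).Subgraph}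
    (hH : H ∈ copySet g U) : H.verts ⊆ (Finset.Icc 1 n : Finset ℕ) := by
  obtain ⟨hadj, ⟨e⟩⟩ := hH
  intro x hx
  obtain ⟨v, hv⟩ := hU (e.symm ⟨x, hx⟩)
  have h1 : H.coe.Adj ⟨x, hx⟩ (e v) := by
    have := e.map_adj_iff.2 hv
    rwa [e.apply_symm_apply] at this
  exact hg _ _ (hadj _ _ h1)

theorem finite_subgraph_verts_subset (s : Finset ℕ) :
    {H : (⊤ : SimpleGraph ℕ).Subgraph | H.verts ⊆ s}.Finite := by
  refine Set.Finite.of_injOn (f := fun H => (H.verts, {p : ℕ × ℕ | H.Adj p.1 p.2}))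
    (t := (𝒫 (s : Set ℕ)) ×ˢ (𝒫 ((s : Set ℕ) ×ˢ (s : Set ℕ)))) ?_ ?_ ?_
  · intro H hH
    exact ⟨hH, fun p hp => ⟨hH hp.fst_mem, hH hp.snd_mem⟩⟩
  · intro H _ H' _ h
    simp only [Prod.mk.injEq] at h
    refine SimpleGraph.Subgraph.ext h.1 ?_
    funext a b
    have := Set.ext_iff.1 h.2 (a, b)
    simpa using this
  · exact s.finite_toSet.finite_subsets.prod
      ((s.finite_toSet.prod s.finite_toSet).finite_subsets)

theorem finite_copySet {V : Type*} {n : ℕ} {g : SimpleGraph ℕ} {U : SimpleGraph V}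
    (hg : SupportedOn n g) (hU : ∀ u, ∃ v, U.Adj u v) : (copySet g U).Finite :=
  (finite_subgraph_verts_subset _).subset fun _ hH => verts_subset_of_mem_copySet hg hU hH

/-- A subgraph of `g` viewed as a subgraph of the complete graph. -/
def toTopSubgraph {g : SimpleGraph ℕ} (H : g.Subgraph) : (⊤ : SimpleGraph ℕ).Subgraph where
  verts := H.verts
  Adj := H.Adj
  adj_sub := fun h => (H.adj_sub h).ne
  edge_vert := H.edge_vert
  symm := H.symm

theorem toTopSubgraph_injective {g : SimpleGraph ℕ} :
    Function.Injective (toTopSubgraph (g := g)) := by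
  intro H H' h
  exact SimpleGraph.Subgraph.ext (congrArg (fun K => K.verts) h) (congrArg (fun K => K.Adj) h)

theorem isMaxUnicyclicSubgraph_of_iso {t d : ℕ} {g : SimpleGraph ℕ} {U : SimpleGraph (Fin t)}
    (hU : IsUnicyclic U) (hcomp : UnicyclicComplete U d) (hfin : ∀ v, (g.neighborSet v).Finite)
    (hdeg : ∀ v, graphDeg g v ≤ d) {H : g.Subgraph} (e : U ≃g H.coe) :
    IsMaxUnicyclicSubgraph g H := by
  have hv : H.verts.ncard = t := by
    have := Nat.card_congr e.toEquiv
    rw [Nat.card_fin] at this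
    exact this.symm
  refine ⟨?_, e.connected_iff.1 hU.1, ?_, ?_⟩
  · exact Set.finite_coe_iff.1 (Finite.of_equiv _ e.toEquiv)
  · rw [hv, ← SimpleGraph.Subgraph.image_coe_edgeSet_coe,
      Set.ncard_image_of_injective _ (Sym2.map.injective Subtype.val_injective), ← hU.2]
    exact (Nat.card_congr e.mapEdgeSet).symm
  · intro u hu hu2 w hw
    have hN : (U.neighborSet (e.symm ⟨u, hu⟩)).ncard = (H.neighborSet u).ncard := by
      have h1 : H.neighborSet u = (fun v => (e v : ℕ)) '' U.neighborSet (e.symm ⟨u, hu⟩) := by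
        ext x
        simp only [Set.mem_image, SimpleGraph.mem_neighborSet, SimpleGraph.Subgraph.mem_neighborSet]
        constructor
        · intro hx
          refine ⟨e.symm ⟨x, hx.snd_mem⟩, ?_, by simp⟩
          exact e.symm.map_adj_iff.2 hx
        · rintro ⟨v, hv, rfl⟩
          have := e.map_adj_iff.2 hv
          rw [e.apply_symm_apply] at this
          exact this
      rw [h1]
      exact (Set.ncard_image_of_injective _ (Subtype.val_injective.comp e.injective)).symm
    rw [← hN] at hu2
    have hd := hcomp _ hu2
    rw [hN] at hd
    have heq := Set.eq_of_subset_of_ncard_le (H.neighborSet_subset u)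
      (by rw [hd]; exact hdeg u) (hfin u)
    have hw' : w ∈ H.neighborSet u := by rw [heq]; exact hw
    exact SimpleGraph.Subgraph.Adj.snd_mem hw'

theorem ncard_copySet_le_unicyclicCount {t d n : ℕ} {g : SimpleGraph ℕ} {U : SimpleGraph (Fin t)}
    (hU : IsUnicyclic U) (hcomp : UnicyclicComplete U d) (hU' : ∀ u, ∃ v, U.Adj u v)
    (hg : SupportedOn n g) (hdeg : ∀ v, graphDeg g v ≤ d) :
    (copySet g U).ncard ≤ unicyclicCount g U := by
  set T := {H : g.Subgraph | IsMaxUnicyclicSubgraph g H ∧ Nonempty (U ≃g H.coe)} with hT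
  have h1 : copySet g U ⊆ toTopSubgraph '' T := by
    rintro H ⟨hadj, ⟨e⟩⟩
    let H' : g.Subgraph := ⟨H.verts, H.Adj, fun h => hadj _ _ h, H.edge_vert, H.symm⟩
    have e' : U ≃g H'.coe := e
    exact ⟨H', ⟨isMaxUnicyclicSubgraph_of_iso hU hcomp hg.finite_neighborSet hdeg e', ⟨e'⟩⟩, rfl⟩
  have h2 : toTopSubgraph '' T ⊆ copySet g U := by
    rintro _ ⟨H, ⟨-, ⟨e⟩⟩, rfl⟩
    exact ⟨fun a b hab => H.adj_sub hab, ⟨e⟩⟩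
  have hfin : T.Finite :=
    Set.Finite.of_finite_image ((finite_copySet hg hU').subset h2) toTopSubgraph_injective.injOn
  exact (Set.ncard_le_ncard h1 (hfin.image _)).trans (Set.ncard_image_le hfin)

/-- The copies of `U` in `g` that avoid the vertex `x`. -/
def copySetAvoiding {V : Type*} (g : SimpleGraph ℕ) (U : SimpleGraph V) (x : ℕ) :
    Set (⊤ : SimpleGraph ℕ).Subgraph := {H | H ∈ copySet g U ∧ x ∉ H.verts}

theorem ncard_copySetAvoiding_mono {V : Type*} {n : ℕ} {g g' : SimpleGraph ℕ} {U : SimpleGraph V}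
    (hU : ∀ u, ∃ v, U.Adj u v) (hg' : SupportedOn n g') (h : g ≤ g') (x : ℕ) :
    (copySetAvoiding g U x).ncard ≤ (copySetAvoiding g' U x).ncard :=
  Set.ncard_le_ncard (fun _ hH => ⟨copySet_mono h U hH.1, hH.2⟩)
    ((finite_copySet hg' hU).subset fun _ hH => hH.1)

theorem ncard_copySet_le_avoiding {V : Type*} {n : ℕ} {g g' : SimpleGraph ℕ} {U : SimpleGraph V}
    (hU : ∀ u, ∃ v, U.Adj u v) (hg : SupportedOn n g) (hg' : SupportedOn (n + 1) g')
    (h : g ≤ g') : (copySet g U).ncard ≤ (copySetAvoiding g' U (n + 1)).ncard := by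
  refine Set.ncard_le_ncard (fun H hH => ⟨copySet_mono h U hH, fun hx => ?_⟩)
    ((finite_copySet hg' hU).subset fun _ hH => hH.1)
  simpa using verts_subset_of_mem_copySet hg hU hH hx

theorem PartialCopy.ncard_avoiding_lt {V : Type*} [Fintype V] {m n h : ℕ} {g : SimpleGraph ℕ}
    {U : SimpleGraph V} {φ : V → ℕ} {I : Set (V × ℕ × Finset ℕ)} {X : Finset ℕ}
    (hs : PartialCopy m g U h Finset.univ φ I X) (hU : ∀ u, ∃ v, U.Adj u v)
    (hg : SupportedOn n g) (b : V) :
    (copySetAvoiding g U (φ b)).ncard < (copySet g U).ncard := by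
  have hinj : Function.Injective φ := by simpa using hs.inj
  let H : (⊤ : SimpleGraph ℕ).Subgraph :=
    { verts := Set.range φ
      Adj := fun x y => ∃ u v, U.Adj u v ∧ φ u = x ∧ φ v = y
      adj_sub := by
        rintro x y ⟨u, v, huv, rfl, rfl⟩
        exact fun h => huv.ne (hinj h)
      edge_vert := by
        rintro x y ⟨u, v, huv, rfl, rfl⟩
        exact ⟨u, rfl⟩
      symm := ⟨by
        rintro x y ⟨u, v, huv, rfl, rfl⟩
        exact ⟨v, u, huv.symm, rfl, rfl⟩⟩ }
  let e : U ≃g H.coe :=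
    { toEquiv := Equiv.ofInjective φ hinj
      map_rel_iff' := by
        intro u v
        constructor
        · rintro ⟨u', v', huv, h1, h2⟩
          rwa [hinj h1, hinj h2] at huv
        · intro huv
          exact ⟨u, v, huv, rfl, rfl⟩ }
  have hH : H ∈ copySet g U := by
    refine ⟨?_, ⟨e⟩⟩
    rintro x y ⟨u, v, huv, rfl, rfl⟩
    exact hs.adj u (Finset.mem_univ _) v (Finset.mem_univ _) huv
  refine Set.ncard_lt_ncard (Set.ssubset_iff_of_subset (fun _ h => h.1) |>.2 ⟨H, hH, ?_⟩)
    (finite_copySet hg hU)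
  exact fun h => h.2 ⟨b, rfl⟩

end Copies

namespace TreeFamily

variable {m d n h K : ℕ} {g : SimpleGraph ℕ} {F : Finset (ℕ × Finset ℕ)}

theorem of_le {h' : ℕ} (hF : TreeFamily m d n g h K F) (hle : h' ≤ h) :
    TreeFamily m d n g h' K F where
  tree := fun p hp => (hF.tree p hp).of_le hle
  sub := hF.sub
  low := hF.low
  card_le := hF.card_le
  disj := hF.disj

theorem card_le_card_filter_disjoint_add (hF : TreeFamily m d n g h K F) (X : Finset ℕ) :
    F.card ≤ (F.filter (fun p => Disjoint p.2 X)).card + X.card := by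
  rw [← Finset.card_filter_add_card_filter_not (s := F) (fun p => Disjoint p.2 X)]
  gcongr
  have hx : ∀ p ∈ F.filter (fun p => ¬ Disjoint p.2 X), ∃ x ∈ X, x ∈ p.2 := by
    intro p hp
    obtain ⟨x, h1, h2⟩ := Finset.not_disjoint_iff.1 (Finset.mem_filter.1 hp).2
    exact ⟨x, h2, h1⟩
  choose! f hfX hfp using hx
  exact Finset.card_le_card_of_injOn f hfX fun p hp q hq hpq =>
    hF.eq_of_mem (Finset.mem_filter.1 hp).1 (Finset.mem_filter.1 hq).1 (hfp p hp)
      (hpq ▸ hfp q hq)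

theorem attachStep (hF : TreeFamily m d n g h K F) (S : Finset ℕ) :
    TreeFamily m d (n + 1) (attachStep g (n + 1) S) h K
      (F.filter (fun p => Disjoint p.2 S)) := by
  have key : ∀ p ∈ F.filter (fun p => Disjoint p.2 S), ∀ v ∈ p.2, v ∉ S ∧ v ≠ n + 1 := by
    intro p hp v hv
    obtain ⟨h1, h2⟩ := Finset.mem_filter.1 hp
    refine ⟨Finset.disjoint_left.1 h2 hv, ?_⟩
    have := Finset.mem_Icc.1 (hF.sub p h1 hv)
    omega
  have hIcc : Finset.Icc 1 n ⊆ Finset.Icc 1 (n + 1) := Finset.Icc_subset_Icc_right (by omega)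
  refine ⟨fun p hp => ?_, fun p hp => ?_, fun p hp => ?_, fun p hp => ?_, fun p hp q hq => ?_⟩
  · exact (hF.tree p (Finset.mem_filter.1 hp).1).congr fun v hv =>
      neighborSet_attachStep_of_notMem (key p hp v hv).1 (key p hp v hv).2
  · exact (hF.sub p (Finset.mem_filter.1 hp).1).trans hIcc
  · have h1 := (Finset.mem_filter.1 hp).1
    obtain ⟨h2, h3⟩ := key p hp _ (hF.root_mem h1)
    have h4 := mem_lowDegSet.1 (hF.low p h1)
    exact mem_lowDegSet.2 ⟨hIcc h4.1, by rw [graphDeg_attachStep_of_notMem h2 h3]; exact h4.2⟩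
  · exact hF.card_le p (Finset.mem_filter.1 hp).1
  · exact hF.disj p (Finset.mem_filter.1 hp).1 q (Finset.mem_filter.1 hq).1

theorem eq_filter_of_image (hF : TreeFamily m d n g h K F) {J : Finset (ℕ × Finset ℕ)}
    (hJ : J ⊆ F) {A : Finset ℕ} (hA : ∀ p ∈ F, p.1 ∉ A) :
    F.filter (fun p => p.1 ∈ A ∪ J.image Prod.fst) = J := by
  ext p
  simp only [Finset.mem_filter, Finset.mem_union, Finset.mem_image]
  constructor
  · rintro ⟨hp, h1 | ⟨q, hq, hqp⟩⟩
    · exact absurd h1 (hA p hp)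
    · rwa [← hF.injOn_root (hJ hq) hp hqp]
  · exact fun hp => ⟨hJ hp, Or.inr ⟨p, hp, rfl⟩⟩

theorem card_union_image (hF : TreeFamily m d n g h K F) {J : Finset (ℕ × Finset ℕ)}
    (hJ : J ⊆ F) {A : Finset ℕ} (hA : ∀ p ∈ F, p.1 ∉ A) :
    (A ∪ J.image Prod.fst).card = A.card + J.card := by
  rw [Finset.card_union_of_disjoint, Finset.card_image_of_injOn (hF.mono hJ).injOn_root]
  rw [Finset.disjoint_right]
  intro x hx
  obtain ⟨p, hp, rfl⟩ := Finset.mem_image.1 hx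
  exact hA p (hJ hp)

theorem image_subset_lowDegSet (hF : TreeFamily m d n g h K F) :
    F.image Prod.fst ⊆ lowDegSet d g n := by
  intro x hx
  obtain ⟨p, hp, rfl⟩ := Finset.mem_image.1 hx
  exact hF.low p hp

/-- Attaching the new vertex to the roots of `m` trees creates a tree of larger depth. -/
theorem insert_attachStep (hd : m < d) (hg : SupportedOn n g) {J Y : Finset (ℕ × Finset ℕ)}
    {K' : ℕ} (hY : TreeFamily m d n g (h + 1) K' Y) (hJ : TreeFamily m d n g h K J)
    (hYJ : ∀ p ∈ Y, ∀ q ∈ J, Disjoint p.2 q.2) (hc : J.card = m) (hK : 1 + m * K ≤ K')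
    {S : Finset ℕ} (hS : S = J.image Prod.fst) :
    TreeFamily m d (n + 1) (_root_.attachStep g (n + 1) S) (h + 1) K'
      (insert (n + 1, insert (n + 1) (J.biUnion Prod.snd))
        (Y.filter (fun p => Disjoint p.2 S))) := by
  have hSlow : S ⊆ lowDegSet d g n := hS ▸ hJ.image_subset_lowDegSet
  have hSn := hSlow.trans (lowDegSet_subset d g n)
  have hIcc : Finset.Icc 1 n ⊆ Finset.Icc 1 (n + 1) := Finset.Icc_subset_Icc_right (by omega)
  have hnot : ∀ x ∈ Finset.Icc 1 n, x ≠ n + 1 := by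
    intro x hx
    have := Finset.mem_Icc.1 hx
    omega
  have hmem : ∀ q ∈ J, ∀ x ∈ q.2, x ∈ S → x = q.1 := by
    intro q hq x hx hxS
    rw [hS] at hxS
    obtain ⟨q', hq', rfl⟩ := Finset.mem_image.1 hxS
    rw [hJ.eq_of_mem hq' hq (hJ.root_mem hq') hx]
  have hScard : S.card = m := by
    rw [hS, Finset.card_image_of_injOn hJ.injOn_root, hc]
  have hW : ∀ x ∈ S, ∃ W, (x, W) ∈ J := by
    intro x hx
    rw [hS] at hx
    obtain ⟨q, hq, rfl⟩ := Finset.mem_image.1 hx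
    exact ⟨q.2, hq⟩
  choose! W hWJ using hW
  have hY' := hY.attachStep S
  have hdisj : ∀ p ∈ Y.filter (fun p => Disjoint p.2 S),
      Disjoint p.2 (insert (n + 1) (J.biUnion Prod.snd)) := by
    intro p hp
    have hpY := (Finset.mem_filter.1 hp).1
    rw [Finset.disjoint_insert_right, Finset.disjoint_biUnion_right]
    exact ⟨fun hx => hnot _ (hY.sub p hpY hx) rfl, fun q hq => hYJ p hpY q hq⟩
  refine ⟨fun p hp => ?_, fun p hp => ?_, fun p hp => ?_, fun p hp => ?_, fun p hp q hq hpq => ?_⟩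
  · rcases Finset.mem_insert.1 hp with rfl | hp
    · refine .node S W (Finset.mem_insert_self _ _) hScard ?_ ?_ ?_ ?_ ?_
      · rw [neighborSet_attachStep_new hg hSn, Set.empty_union]
      · intro c hc'
        exact (Finset.subset_biUnion_of_mem Prod.snd (hWJ c hc')).trans (Finset.subset_insert _ _)
      · exact fun c hc' hx => hnot _ (hJ.sub _ (hWJ c hc') hx) rfl
      · exact fun c hc' c' hc'' hne => hJ.disj _ (hWJ c hc') _ (hWJ c' hc'') (by simp [hne])
      · intro c hc'
        refine (hJ.tree _ (hWJ c hc')).insert_parent (neighborSet_attachStep_of_mem hSn hc')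
          fun v hv hvc => neighborSet_attachStep_of_notMem
            (fun hvS => hvc (hmem _ (hWJ c hc') v hv hvS)) (hnot _ (hJ.sub _ (hWJ c hc') hv))
    · exact hY'.tree p hp
  · rcases Finset.mem_insert.1 hp with rfl | hp
    · refine Finset.insert_subset (by simp) (Finset.biUnion_subset.2 fun q hq => ?_)
      exact (hJ.sub q hq).trans hIcc
    · exact hY'.sub p hp
  · rcases Finset.mem_insert.1 hp with rfl | hp
    · rw [mem_lowDegSet, graphDeg_attachStep_new hg hSn, hScard]
      exact ⟨by simp, hd⟩
    · exact hY'.low p hp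
  · rcases Finset.mem_insert.1 hp with rfl | hp
    · refine (Finset.card_insert_le _ _).trans ?_
      have := Finset.card_biUnion_le_card_mul J Prod.snd K hJ.card_le
      rw [hc] at this
      omega
    · exact hY'.card_le p hp
  · rcases Finset.mem_insert.1 hp with rfl | hp1
    · rcases Finset.mem_insert.1 hq with rfl | hq1
      · exact absurd rfl hpq
      · exact (hdisj q hq1).symm
    · rcases Finset.mem_insert.1 hq with rfl | hq1
      · exact hdisj p hp1
      · exact hY'.disj p hp1 q hq1 hpq

end TreeFamily

theorem one_sub_le_indicator_disjoint (W S : Finset ℕ) :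
    (1 : ℝ) - ∑ x ∈ W, (if x ∈ S then (1 : ℝ) else 0) ≤ if Disjoint W S then 1 else 0 := by
  split_ifs with h
  · have : (0 : ℝ) ≤ ∑ x ∈ W, (if x ∈ S then (1 : ℝ) else 0) :=
      Finset.sum_nonneg fun _ _ => by split_ifs <;> norm_num
    linarith
  · obtain ⟨x, h1, h2⟩ := Finset.not_disjoint_iff.1 h
    have := Finset.single_le_sum (f := fun x => if x ∈ S then (1 : ℝ) else 0)
      (fun _ _ => by split_ifs <;> norm_num) h1
    simp only [h2, if_true] at this
    linarith

theorem stepAvg_hits_le {m d n : ℕ} (hm : 1 ≤ m) (hd : 2 * m < d) {g : SimpleGraph ℕ}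
    (h : UAInvariant m d n g) (W : Finset ℕ) :
    stepAvg m d n g (fun S => ∑ x ∈ W, if x ∈ S then 1 else 0) ≤ W.card * (m * d / n) := by
  rw [stepAvg_sum, ← nsmul_eq_mul]
  exact Finset.sum_le_card_nsmul _ _ _ fun x _ => stepAvg_mem_le hm hd h x

section Race

variable {m d : ℕ} {Z : SimpleGraph ℕ → Prop}

open Classical in
/-- A lower bound for the hitting probability when, during `T` steps, a waiting state is left
towards good states with probability at least `a / n` and lost with probability at most `b / n`. -/
theorem le_hitValue_of_race (hd : 2 * m < d) (hZ : Persistent m d Z)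
    {A : ℕ → SimpleGraph ℕ → Prop} {T n : ℕ} {ε a b : ℝ} (hε : 0 < ε) (ha : 0 < a) (hb : 0 ≤ b)
    (hn : 0 < n) (hT : T * (a + b) ≤ n)
    (hstep : ∀ i < T, ∀ g, UAReachable m d (n + i) g → A i g → ∃ good bad : Finset ℕ → Prop,
      a / n ≤ stepAvg m d (n + i) g (fun S => if good S then 1 else 0) ∧
      stepAvg m d (n + i) g (fun S => if bad S then 1 else 0) ≤ b / n ∧
      ∀ S, S ⊆ lowDegSet d g (n + i) → S.card = m →
        (good S → ε ≤ hitValue m d Z (n + i + 1) (attachStep g (n + i + 1) S)) ∧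
        (¬ bad S → A (i + 1) (attachStep g (n + i + 1) S)))
    {g : SimpleGraph ℕ} (hg : UAReachable m d n g) (hA : A 0 g) :
    ε * a * T / (2 * n) ≤ hitValue m d Z n g := by
  have hn' : (0 : ℝ) < n := by exact_mod_cast hn
  have main : ∀ k ≤ T, ∀ g, UAReachable m d (n + (T - k)) g → A (T - k) g →
      ε * a * k / (2 * n) ≤ hitValue m d Z (n + (T - k)) g := by
    intro k
    induction k with
    | zero =>
      intro _ g hg _
      simpa using hitValue_nonneg hd hZ hg
    | succ k ih =>
      intro hk g hg hA
      obtain ⟨i, hi⟩ : ∃ i, i = T - (k + 1) := ⟨_, rfl⟩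
      have hik : T - k = i + 1 := by omega
      rw [← hi] at hg hA ⊢
      rw [hik] at ih
      obtain ⟨good, bad, h1, h2, h3⟩ := hstep i (by omega) g hg hA
      have hinv := hg.invariant hd
      set f := ε * a * k / (2 * n) with hf
      have hf0 : 0 ≤ f := by positivity
      have hkT : (k : ℝ) ≤ T := by exact_mod_cast (by omega : k ≤ T)
      have hfab : f * (a + b) ≤ ε * a / 2 := by
        rw [hf, div_mul_eq_mul_div, div_le_iff₀ (by positivity)]
        have : k * (a + b) ≤ n := le_trans (by gcongr) hT
        calc ε * a * k * (a + b) = ε * a * (k * (a + b)) := by ring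
          _ ≤ ε * a * n := by gcongr
          _ = ε * a / 2 * (2 * n) := by ring
      have hfε : f ≤ ε := by
        have h4 : f * a ≤ ε * a / 2 := le_trans (by nlinarith) hfab
        nlinarith
      have hstepv : stepAvg m d (n + i) g (fun S =>
          ((ε - f) * (if good S then 1 else 0) + f) - f * (if bad S then 1 else 0)) ≤
          hitValue m d Z (n + i) g := by
        rw [hitValue_eq_stepAvg hd hZ hg]
        refine stepAvg_mono fun S hS hc => ?_
        have hr := hg.attach hd hS hc
        have hv := h3 S hS hc
        by_cases hbad : bad S
        · by_cases hgood : good S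
          · have := hv.1 hgood
            simp only [hbad, hgood, if_true]
            linarith
          · have := hitValue_nonneg hd hZ hr
            simp only [hbad, hgood, if_true, if_false]
            linarith
        · have hv2 := ih (by omega) _ hr (hv.2 hbad)
          by_cases hgood : good S
          · have := hv.1 hgood
            simp only [hbad, hgood, if_true, if_false]
            linarith
          · simp only [hbad, hgood, if_false]
            simp only [← add_assoc] at hv2
            linarith
      refine le_trans ?_ hstepv
      rw [stepAvg_sub, stepAvg_add, stepAvg_const_mul, stepAvg_const_mul, stepAvg_const hd hinv]
      have h5 : (ε - f) * (a / n) ≤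
          (ε - f) * stepAvg m d (n + i) g (fun S => if good S then 1 else 0) :=
        mul_le_mul_of_nonneg_left h1 (by linarith)
      have h6 : f * stepAvg m d (n + i) g (fun S => if bad S then 1 else 0) ≤ f * (b / n) :=
        mul_le_mul_of_nonneg_left h2 hf0
      have h7 : ε * a * ((k + 1 : ℕ) : ℝ) / (2 * n) = f + ε * a / 2 / n := by
        rw [hf]; push_cast; field_simp
      have h8 : (ε - f) * (a / n) - f * (b / n) = (ε * a - f * (a + b)) / n := by ring
      have h9 : ε * a / 2 / n ≤ (ε * a - f * (a + b)) / n := by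
        gcongr
        linarith
      rw [h7]
      linarith
  have := main T le_rfl g (by simpa using hg) (by simpa using hA)
  simpa using this

end Race

theorem exists_nat_between_mul {η : ℝ} (hη : 0 < η) :
    ∃ N : ℕ, ∀ n : ℕ, N ≤ n → 0 < n ∧ ∃ T : ℕ, 0 < T ∧ η * n / 2 ≤ T ∧ (T : ℝ) ≤ η * n := by
  obtain ⟨N, hN⟩ := exists_nat_gt (2 / η)
  refine ⟨N, fun n hn => ?_⟩
  have hn' : (N : ℝ) ≤ n := by exact_mod_cast hn
  have h2 : 2 < η * n := by
    rw [div_lt_iff₀ hη] at hN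
    nlinarith
  have hnpos : 0 < n := by
    rcases Nat.eq_zero_or_pos n with rfl | h
    · simp at h2
      linarith
    · exact h
  refine ⟨hnpos, ⌊η * n⌋₊, Nat.floor_pos.2 (by linarith), ?_, Nat.floor_le (by linarith)⟩
  have := Nat.lt_floor_add_one (η * n)
  linarith

/-- From every late reachable graph satisfying `Z'` with linearly many disjoint past trees of depth
`h`, the property `Z` is eventually reached with probability bounded below. -/
def FamilyBound (m d : ℕ) (Z Z' : SimpleGraph ℕ → Prop) (h K : ℕ) : Prop :=
  ∀ c : ℝ, 0 < c → ∃ ε : ℝ, 0 < ε ∧ ∃ N : ℕ, ∀ n, N ≤ n → ∀ g, UAReachable m d n g → Z' g →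
    ∀ F, TreeFamily m d n g h K F → c * n ≤ F.card → ε ≤ hitValue m d Z n g

section FamilyStep

variable {m d : ℕ} {Z Z' : SimpleGraph ℕ → Prop} {h K : ℕ}

/-- Disjoint families `Y` of deep trees and `F` of shallow trees present at time `n`. -/
structure TreeConfig (m d h K n : ℕ) (Z' : SimpleGraph ℕ → Prop) (g : SimpleGraph ℕ)
    (Y F : Finset (ℕ × Finset ℕ)) : Prop where
  reach : UAReachable m d n g
  prop : Z' g
  deep : TreeFamily m d n g (h + 1) (1 + m * K) Y
  shallow : TreeFamily m d n g h K F
  disj : ∀ p ∈ Y, ∀ q ∈ F, Disjoint p.2 q.2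

theorem TreeConfig.step {n : ℕ} {g : SimpleGraph ℕ} {Y F : Finset (ℕ × Finset ℕ)}
    (hd : 2 * m < d) (hZ' : Persistent m d Z') (hC : TreeConfig m d h K n Z' g Y F)
    {S : Finset ℕ} (hS : S ⊆ lowDegSet d g n) (hc : S.card = m) :
    TreeConfig m d h K (n + 1) Z' (attachStep g (n + 1) S) (Y.filter (fun p => Disjoint p.2 S))
      (F.filter (fun p => Disjoint p.2 S)) where
  reach := hC.reach.attach hd hS hc
  prop := hZ' n g S hC.reach hS hc hC.prop
  deep := hC.deep.attachStep S
  shallow := hC.shallow.attachStep S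
  disj := fun p hp q hq => hC.disj p (Finset.mem_filter.1 hp).1 q (Finset.mem_filter.1 hq).1

theorem TreeConfig.step_good {n : ℕ} {g : SimpleGraph ℕ} {Y F : Finset (ℕ × Finset ℕ)}
    (hd : 2 * m < d) (hZ' : Persistent m d Z') (hC : TreeConfig m d h K n Z' g Y F)
    {S : Finset ℕ} (hS : S ⊆ lowDegSet d g n) (hc : S.card = m) {J : Finset (ℕ × Finset ℕ)}
    (hJ : J ⊆ F) (hJc : J.card = m) (hSJ : S = J.image Prod.fst) :
    ∃ y, y ∉ Y ∧ TreeConfig m d h K (n + 1) Z' (attachStep g (n + 1) S)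
      (insert y (Y.filter (fun p => Disjoint p.2 S))) (F.filter (fun p => Disjoint p.2 S)) := by
  have hg := (hC.reach.invariant hd).supp
  have hJT := hC.shallow.mono hJ
  have h1 := hC.deep.insert_attachStep (by omega) hg hJT
    (fun p hp q hq => hC.disj p hp q (hJ hq)) hJc le_rfl hSJ
  refine ⟨_, ?_, hC.reach.attach hd hS hc, hZ' n g S hC.reach hS hc hC.prop, h1,
    hC.shallow.attachStep S, ?_⟩
  · intro hy
    simpa using hC.deep.sub _ hy (Finset.mem_insert_self _ _)
  · intro p hp q hq
    obtain ⟨hq1, hq2⟩ := Finset.mem_filter.1 hq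
    rcases Finset.mem_insert.1 hp with rfl | hp
    · rw [Finset.disjoint_insert_left, Finset.disjoint_biUnion_left]
      refine ⟨fun hx => by simpa using hC.shallow.sub q hq1 hx, fun p hp => ?_⟩
      refine hC.shallow.disj p (hJ hp) q hq1 ?_
      rintro rfl
      refine Finset.disjoint_left.1 hq2 (hC.shallow.root_mem hq1) ?_
      rw [hSJ]
      exact Finset.mem_image_of_mem _ hp
    · exact hC.disj p (Finset.mem_filter.1 hp).1 q hq1

open Classical in
theorem FamilyBound.descend (hm : 1 ≤ m) (hd : 2 * m < d) (hZ : Persistent m d Z)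
    (hZ' : Persistent m d Z') (hQ : FamilyBound m d Z Z' (h + 1) (1 + m * K)) :
    FamilyBound m d Z Z' h K := by
  intro c hc
  have hm' : (1 : ℝ) ≤ m := by exact_mod_cast hm
  have hd' : (1 : ℝ) ≤ d := by exact_mod_cast (by omega : 1 ≤ d)
  obtain ⟨p, hp, N₁, hN₁⟩ := choose_ratio_lower (c / 4) (by linarith) m
  set B : ℝ := ((1 + m * K : ℕ) : ℝ) * (m * d) with hB
  have hBpos : 0 < B := by
    have : (0 : ℝ) < ((1 + m * K : ℕ) : ℝ) := by positivity
    positivity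
  set η : ℝ := min 1 (min (c / (2 * m)) (p / (2 * B))) with hη
  have hηpos : 0 < η := by positivity
  have hη1 : η ≤ 1 := min_le_left _ _
  have hη2 : m * η ≤ c / 2 := by
    have : η ≤ c / (2 * m) := (min_le_right _ _).trans (min_le_left _ _)
    rw [le_div_iff₀ (by positivity)] at this
    linarith
  have hη3 : η * B ≤ p / 2 := by
    have : η ≤ p / (2 * B) := (min_le_right _ _).trans (min_le_right _ _)
    rw [le_div_iff₀ (by positivity)] at this
    linarith
  obtain ⟨ε, hε, N₂, hN₂⟩ := hQ (p * η / 16) (by positivity)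
  obtain ⟨N₃, hN₃⟩ := exists_nat_between_mul hηpos
  refine ⟨ε * p / 4, by positivity, max N₁ (max N₂ N₃), fun n hn g hg hg' F hF hFc => ?_⟩
  simp only [max_le_iff] at hn
  obtain ⟨hnpos, T, hTpos, hT1, hT2⟩ := hN₃ n hn.2.2
  have hn' : (0 : ℝ) < n := by exact_mod_cast hnpos
  have hT' : (0 : ℝ) < T := by exact_mod_cast hTpos
  have hTn : (T : ℝ) ≤ n := by nlinarith
  have main : ∀ k ≤ T, ∀ g Y F, TreeConfig m d h K (n + (T - k)) Z' g Y F → Y.card ≤ T - k →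
      c * n - m * ((T - k : ℕ) : ℝ) ≤ F.card →
      ε / T * (Y.card + p / 2 * k - p / 4 * T) ≤ hitValue m d Z (n + (T - k)) g := by
    intro k
    induction k with
    | zero =>
      intro _ g Y F hC hYT _
      simp only [Nat.sub_zero, Nat.cast_zero, mul_zero, add_zero] at hC hYT ⊢
      by_cases hY : (Y.card : ℝ) ≤ p / 4 * T
      · refine le_trans ?_ (hitValue_nonneg hd hZ hC.reach)
        exact mul_nonpos_of_nonneg_of_nonpos (by positivity) (by linarith)
      · refine le_trans ?_ (hN₂ (n + T) (by omega) g hC.reach hC.prop Y hC.deep ?_)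
        · rw [div_mul_eq_mul_div, div_le_iff₀ hT']
          have : (Y.card : ℝ) ≤ T := by exact_mod_cast hYT
          have : 0 ≤ p / 4 * T := by positivity
          gcongr
          linarith
        · push_cast
          have h1 : p * η / 16 * ((n : ℝ) + T) ≤ p * η / 16 * (2 * n) := by
            gcongr
            linarith
          have h2 : p / 4 * (η * n / 2) ≤ p / 4 * T := by gcongr
          linarith
    | succ k ih =>
      intro hk g Y F hC hYT hFc
      obtain ⟨i, hi⟩ : ∃ i, i = T - (k + 1) := ⟨_, rfl⟩
      have hik : T - k = i + 1 := by omega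
      rw [← hi] at hC hYT hFc ⊢
      rw [hik] at ih
      have hinv := hC.reach.invariant hd
      have hiT : (i : ℝ) ≤ T := by exact_mod_cast (by omega : i ≤ T)
      have hF2 : c / 4 * ((n + i : ℕ) : ℝ) ≤ F.card := by
        push_cast
        have h1 : m * (i : ℝ) ≤ m * (η * n) := by gcongr; linarith
        have h2 : m * η * n ≤ c / 2 * n := by gcongr
        have h3 : c / 4 * (n + (i : ℝ)) ≤ c / 4 * (2 * n) := by gcongr; linarith
        linarith
      let good : Finset ℕ → Prop := fun S => ∃ J ⊆ F, J.card = m ∧ S = J.image Prod.fst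
      have hgood : p ≤ stepAvg m d (n + i) g (fun S => if good S then 1 else 0) := by
        have := le_stepAvg_indicator (a := p) hd hinv good (le_refl m) (by omega)
          ((F.powersetCard m).image (fun J => J.image Prod.fst)) ?_ ?_
        · simpa using this
        · intro S hS
          obtain ⟨J, hJ, rfl⟩ := Finset.mem_image.1 hS
          obtain ⟨hJF, hJc⟩ := Finset.mem_powersetCard.1 hJ
          refine ⟨(hC.shallow.mono hJF).image_subset_lowDegSet, ?_, J, hJF, hJc, rfl⟩
          rw [Finset.card_image_of_injOn (hC.shallow.mono hJF).injOn_root, hJc]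
        · rw [Finset.card_image_of_injOn, Finset.card_powersetCard]
          · exact hN₁ (n + i) (by omega) _ hF2
          · intro J hJ J' hJ' hJJ
            have h1 := hC.shallow.eq_filter_of_image (Finset.mem_powersetCard.1 hJ).1 (A := ∅)
              (by simp)
            have h2 := hC.shallow.eq_filter_of_image (Finset.mem_powersetCard.1 hJ').1 (A := ∅)
              (by simp)
            rw [← h1, ← h2]
            simp only at hJJ
            rw [hJJ]
      have hhits : stepAvg m d (n + i) g
          (fun S => ∑ y ∈ Y, ∑ x ∈ y.2, if x ∈ S then 1 else 0) ≤ p / 2 := by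
        rw [stepAvg_sum]
        calc _ ≤ Y.card • (B / n) := by
              refine Finset.sum_le_card_nsmul _ _ _ fun y hy => ?_
              refine (stepAvg_hits_le hm hd hinv y.2).trans ?_
              rw [hB, mul_div_assoc ((1 + m * K : ℕ) : ℝ)]
              have h1 : (y.2.card : ℝ) ≤ ((1 + m * K : ℕ) : ℝ) := by
                exact_mod_cast hC.deep.card_le y hy
              refine mul_le_mul h1 ?_ (by positivity) (by positivity)
              refine div_le_div_of_nonneg_left (by positivity) hn' ?_
              push_cast
              linarith [Nat.cast_nonneg (α := ℝ) i]
          _ ≤ p / 2 := by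
              rw [nsmul_eq_mul]
              have h1 : (Y.card : ℝ) ≤ η * n := by
                have : (Y.card : ℝ) ≤ i := by exact_mod_cast hYT
                linarith
              calc (Y.card : ℝ) * (B / n) ≤ η * n * (B / n) := by gcongr
                _ = η * B := by field_simp
                _ ≤ p / 2 := hη3
      have hstepv : stepAvg m d (n + i) g (fun S => ε / T *
          (((if good S then 1 else 0) + (Y.card + p / 2 * k - p / 4 * T)) -
            ∑ y ∈ Y, ∑ x ∈ y.2, if x ∈ S then 1 else 0)) ≤ hitValue m d Z (n + i) g := by
        rw [hitValue_eq_stepAvg hd hZ hC.reach]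
        refine stepAvg_mono fun S hS hSc => ?_
        have hFc' : c * n - m * ((i + 1 : ℕ) : ℝ) ≤
            (F.filter (fun p => Disjoint p.2 S)).card := by
          have h1 := hC.shallow.card_le_card_filter_disjoint_add S
          rw [hSc] at h1
          have h2 : (F.card : ℝ) ≤ (F.filter (fun p => Disjoint p.2 S)).card + m := by
            exact_mod_cast h1
          push_cast
          linarith
        have hYc : (Y.card : ℝ) - ∑ y ∈ Y, ∑ x ∈ y.2, (if x ∈ S then (1 : ℝ) else 0) ≤
            (Y.filter (fun p => Disjoint p.2 S)).card := by
          rw [Finset.card_filter, Nat.cast_sum, Finset.card_eq_sum_ones, Nat.cast_sum,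
            ← Finset.sum_sub_distrib]
          refine Finset.sum_le_sum fun y _ => ?_
          have := one_sub_le_indicator_disjoint y.2 S
          push_cast
          exact this
        have hfle : (Y.filter (fun p => Disjoint p.2 S)).card ≤ i :=
          (Finset.card_filter_le _ _).trans hYT
        by_cases hgS : good S
        · obtain ⟨J, hJ, hJc, hSJ⟩ := id hgS
          obtain ⟨y, hyY, hC'⟩ := hC.step_good hd hZ' hS hSc hJ hJc hSJ
          have hcard : (insert y (Y.filter (fun p => Disjoint p.2 S))).card =
              (Y.filter (fun p => Disjoint p.2 S)).card + 1 :=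
            Finset.card_insert_of_notMem fun hy => hyY (Finset.mem_filter.1 hy).1
          have hv := ih (by omega) _ _ _ hC' (by omega) hFc'
          refine le_trans ?_ hv
          rw [hcard, if_pos hgS]
          refine mul_le_mul_of_nonneg_left ?_ (by positivity)
          push_cast
          linarith
        · have hv := ih (by omega) _ _ _ (hC.step hd hZ' hS hSc) (by omega) hFc'
          refine le_trans ?_ hv
          rw [if_neg hgS]
          refine mul_le_mul_of_nonneg_left ?_ (by positivity)
          linarith
      refine le_trans ?_ hstepv
      rw [stepAvg_const_mul, stepAvg_sub, stepAvg_add, stepAvg_const hd hinv]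
      refine mul_le_mul_of_nonneg_left ?_ (by positivity)
      push_cast
      linarith
  have h0 : TreeConfig m d h K (n + (T - T)) Z' g ∅ F :=
    ⟨by simpa using hg, hg', ⟨by simp, by simp, by simp, by simp, by simp⟩, by simpa using hF,
      by simp⟩
  have := main T le_rfl g ∅ F h0 (by simp) (by simpa using hFc)
  simp only [Nat.sub_self, add_zero, Finset.card_empty, Nat.cast_zero, zero_add] at this
  refine le_trans (le_of_eq ?_) this
  field_simp
  ring

theorem familyBound_zero_of_forall (hm : 1 ≤ m) (hd : 2 * m < d) (hZ : Persistent m d Z)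
    (hZ' : Persistent m d Z') (h : ℕ) (hQ : ∀ K, FamilyBound m d Z Z' h K) (K : ℕ) :
    FamilyBound m d Z Z' 0 K := by
  induction h generalizing K with
  | zero => exact hQ K
  | succ h ih => exact ih (fun K => (hQ (1 + m * K)).descend hm hd hZ hZ') K

theorem FamilyBound.exists_le_hitValue (hd : 2 * m < d) (hQ : FamilyBound m d Z Z' 0 1) :
    ∃ ε : ℝ, 0 < ε ∧ ∃ N : ℕ, ∀ n, N ≤ n → ∀ g, UAReachable m d n g → Z' g →
      ε ≤ hitValue m d Z n g := by
  have hd' : (0 : ℝ) < d := by exact_mod_cast (by omega : 0 < d)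
  obtain ⟨ε, hε, N, hN⟩ := hQ (1 / d) (by positivity)
  refine ⟨ε, hε, N, fun n hn g hg hg' => ?_⟩
  have hinj : Function.Injective (fun v : ℕ => (v, ({v} : Finset ℕ))) := fun a b hab => by
    simpa using congrArg Prod.fst hab
  refine hN n hn g hg hg' ((lowDegSet d g n).image fun v => (v, {v})) ⟨?_, ?_, ?_, ?_, ?_⟩ ?_
  · intro p hp
    obtain ⟨v, hv, rfl⟩ := Finset.mem_image.1 hp
    exact .leaf (by simp)
  · intro p hp
    obtain ⟨v, hv, rfl⟩ := Finset.mem_image.1 hp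
    simpa using (lowDegSet_subset d g n) hv
  · intro p hp
    obtain ⟨v, hv, rfl⟩ := Finset.mem_image.1 hp
    exact hv
  · intro p hp
    obtain ⟨v, hv, rfl⟩ := Finset.mem_image.1 hp
    simp
  · intro p hp q hq hpq
    obtain ⟨v, hv, rfl⟩ := Finset.mem_image.1 hp
    obtain ⟨w, hw, rfl⟩ := Finset.mem_image.1 hq
    rw [Finset.disjoint_singleton]
    rintro rfl
    exact hpq rfl
  · rw [Finset.card_image_of_injective _ hinj, div_mul_eq_mul_div, one_mul, div_le_iff₀ hd',
      mul_comm]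
    exact_mod_cast (hg.invariant hd).le_mul_card_lowDegSet hd

end FamilyStep

open Classical in
/-- The race bound in the form where the state carries a linear resource `r` that loses at most
`m` units per step. -/
theorem exists_le_hitValue_of_race {m d : ℕ} {Z : SimpleGraph ℕ → Prop} (hm : 1 ≤ m)
    (hd : 2 * m < d) (hZ : Persistent m d Z) {c p b ε : ℝ} (hc : 0 < c) (hp : 0 < p) (hb : 0 ≤ b)
    (hε : 0 < ε) (N : ℕ) :
    ∃ ε' : ℝ, 0 < ε' ∧ ∃ N' : ℕ, ∀ A : ℕ → SimpleGraph ℕ → ℕ → Prop,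
      (∀ n, N ≤ n → ∀ g r, UAReachable m d n g → A n g r → c / 4 * n ≤ r →
        ∃ good bad : Finset ℕ → Prop,
          p / n ≤ stepAvg m d n g (fun S => if good S then 1 else 0) ∧
          stepAvg m d n g (fun S => if bad S then 1 else 0) ≤ b / n ∧
          ∀ S, S ⊆ lowDegSet d g n → S.card = m →
            (good S → ε ≤ hitValue m d Z (n + 1) (attachStep g (n + 1) S)) ∧
            (¬ bad S → ∃ r', r ≤ r' + m ∧ A (n + 1) (attachStep g (n + 1) S) r')) →
      ∀ n, N' ≤ n → ∀ g r, UAReachable m d n g → A n g r → c * n ≤ r →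
        ε' ≤ hitValue m d Z n g := by
  have hm' : (1 : ℝ) ≤ m := by exact_mod_cast hm
  set η : ℝ := min 1 (min (c / (2 * m)) (1 / (p / 2 + b))) with hη
  have hηpos : 0 < η := by positivity
  have hη1 : η ≤ 1 := min_le_left _ _
  have hη2 : m * η ≤ c / 2 := by
    have : η ≤ c / (2 * m) := (min_le_right _ _).trans (min_le_left _ _)
    rw [le_div_iff₀ (by positivity)] at this
    linarith
  have hη3 : η * (p / 2 + b) ≤ 1 := by
    have : η ≤ 1 / (p / 2 + b) := (min_le_right _ _).trans (min_le_right _ _)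
    rwa [le_div_iff₀ (by positivity)] at this
  obtain ⟨N₁, hN₁⟩ := exists_nat_between_mul hηpos
  refine ⟨ε * p * η / 8, by positivity, max N N₁, fun A hA n hn g r hg hgA hr => ?_⟩
  simp only [max_le_iff] at hn
  obtain ⟨hnpos, T, hTpos, hT1, hT2⟩ := hN₁ n hn.2
  have hn' : (0 : ℝ) < n := by exact_mod_cast hnpos
  have hTn : (T : ℝ) ≤ n := by nlinarith
  have key := le_hitValue_of_race (T := T) (n := n) (a := p / 2) (b := b) hd hZ
    (A := fun i g => ∃ r, A (n + i) g r ∧ c * n - m * (i : ℝ) ≤ r) hε (by positivity) hb hnpos ?_ ?_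
    hg ⟨r, hgA, by simpa using hr⟩
  · refine le_trans ?_ key
    rw [le_div_iff₀ (by positivity)]
    have : ε * p / 2 * (η * n / 2) ≤ ε * p / 2 * T :=
      mul_le_mul_of_nonneg_left hT1 (by positivity)
    linarith
  · calc (T : ℝ) * (p / 2 + b) ≤ η * n * (p / 2 + b) :=
          mul_le_mul_of_nonneg_right hT2 (by positivity)
      _ = n * (η * (p / 2 + b)) := by ring
      _ ≤ n * 1 := mul_le_mul_of_nonneg_left hη3 hn'.le
      _ = n := mul_one _
  · rintro i hi g hg ⟨r, hgA, hr⟩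
    have hi' : (i : ℝ) ≤ T := by exact_mod_cast hi.le
    have hr' : c / 4 * ((n + i : ℕ) : ℝ) ≤ r := by
      push_cast
      have h1 : m * (i : ℝ) ≤ m * (η * n) := by gcongr; linarith
      have h2 : m * η * n ≤ c / 2 * n := by gcongr
      have h3 : c / 4 * (n + (i : ℝ)) ≤ c / 4 * (2 * n) := by gcongr; linarith
      linarith
    obtain ⟨good, bad, hgood, hbad, hS⟩ := hA (n + i) (by omega) g r hg hgA hr'
    refine ⟨good, bad, le_trans ?_ hgood, hbad.trans ?_, fun S hS1 hS2 => ?_⟩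
    · rw [div_le_div_iff₀ hn' (by positivity)]
      push_cast
      have : p / 2 * (n + (i : ℝ)) ≤ p / 2 * (2 * n) := by gcongr; linarith
      linarith
    · refine div_le_div_of_nonneg_left hb hn' ?_
      push_cast
      linarith [Nat.cast_nonneg (α := ℝ) i]
    · refine ⟨(hS S hS1 hS2).1, fun hbS => ?_⟩
      obtain ⟨r', hr1, hr2⟩ := (hS S hS1 hS2).2 hbS
      refine ⟨r', hr2, ?_⟩
      have : (r : ℝ) ≤ r' + m := by exact_mod_cast hr1
      push_cast
      linarith

theorem persistent_le_ncard_copySet {V : Type*} {m d : ℕ} {U : SimpleGraph V}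
    (hU' : ∀ u, ∃ v, U.Adj u v) (hd : 2 * m < d) (j : ℕ) :
    Persistent m d (fun g => j ≤ (copySet g U).ncard) := fun _ _ _ hg hS hc hj =>
  hj.trans (Set.ncard_le_ncard (copySet_mono (le_attachStep _ _ _) U)
    (finite_copySet ((hg.attach hd hS hc).invariant hd).supp hU'))

section Growth

variable {V : Type*} [Fintype V] {m d n K j : ℕ} {U : SimpleGraph V}
  {g : SimpleGraph ℕ} {D : Finset V} {φ : V → ℕ} {x : ℕ} {F : Finset (ℕ × Finset ℕ)}

theorem PartialCopy.image_subset_Icc {h : ℕ} {I : Set (V × ℕ × Finset ℕ)} {X : Finset ℕ}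
    (hU : U.Connected) (he : U.edgeSet.ncard = Fintype.card V)
    (hs : PartialCopy m g U h D φ I X) (hg : SupportedOn n g)
    (hD : 2 * D.card ≤ innerDegSum U D) : D.image φ ⊆ Finset.Icc 1 n := by
  intro y hy
  obtain ⟨b, hb, rfl⟩ := Finset.mem_image.1 hy
  obtain ⟨u, hu, hbu⟩ := exists_inner_adj hU he hD hb
  exact hg _ _ (hs.adj b hb u hu hbu)

theorem PartialCopy.mem_lowDegSet_of_adj {h : ℕ} {X : Finset ℕ} (hU : U.Connected)
    (he : U.edgeSet.ncard = Fintype.card V) (hcomp : UnicyclicComplete U d)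
    (hs : PartialCopy m g U h D φ ∅ X) (hg : SupportedOn n g)
    (hD : 2 * D.card ≤ innerDegSum U D) {b v : V} (hb : b ∈ D) (hv : v ∉ D) (hbv : U.Adj b v) :
    φ b ∈ lowDegSet d g n := by
  refine mem_lowDegSet.2 ⟨hs.image_subset_Icc hU he hg hD (Finset.mem_image_of_mem _ hb), ?_⟩
  obtain ⟨u, hu, hbu⟩ := exists_inner_adj hU he hD hb
  have h2 : 2 ≤ (U.neighborSet b).ncard := by
    rw [← Set.ncard_pair (ne_of_mem_of_not_mem hu hv)]
    exact Set.ncard_le_ncard (by rintro y (rfl | rfl) <;> assumption) (Set.toFinite _)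
  rw [← hcomp b h2, graphDeg, hs.nbr b hb h2]
  have h0 : {r | ∃ W, (b, r, W) ∈ (∅ : Set (V × ℕ × Finset ℕ))} = ∅ := by
    ext
    simp
  rw [h0, Set.union_empty]
  refine (Set.ncard_image_le (Set.toFinite _)).trans_lt (Set.ncard_lt_ncard ?_ (Set.toFinite _))
  exact ⟨fun y hy => hy.2, fun hsub => hv (hsub hbv).1⟩

/-- A partial copy of `U` containing the cycle and the vertex `x`, with no pending trees, together
with a family of disjoint trees and at least `j` copies of `U` avoiding `x`. -/
structure GrowState (m d n K j : ℕ) (U : SimpleGraph V) (g : SimpleGraph ℕ) (D : Finset V)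
    (φ : V → ℕ) (x : ℕ) (F : Finset (ℕ × Finset ℕ)) : Prop where
  reach : UAReachable m d n g
  family : TreeFamily m d n g (Fintype.card V) K F
  copy : PartialCopy m g U 0 D φ ∅ (D.image φ)
  core : 2 * D.card ≤ innerDegSum U D
  mem : x ∈ D.image φ
  count : j ≤ (copySetAvoiding g U x).ncard

theorem GrowState.step (hU : U.Connected) (he : U.edgeSet.ncard = Fintype.card V)
    (hU' : ∀ u, ∃ v, U.Adj u v) (hd : 2 * m < d) (hs : GrowState m d n K j U g D φ x F)
    {S : Finset ℕ} (hS : S ⊆ lowDegSet d g n) (hc : S.card = m) (hSD : Disjoint S (D.image φ)) :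
    GrowState m d (n + 1) K j U (attachStep g (n + 1) S) D φ x
      (F.filter (fun p => Disjoint p.2 S)) := by
  have hg := (hs.reach.invariant hd).supp
  have hr := hs.reach.attach hd hS hc
  exact ⟨hr, hs.family.attachStep S,
    hs.copy.attachStep_of_disjoint (hs.copy.image_subset_Icc hU he hg hs.core) hSD, hs.core, hs.mem,
    hs.count.trans (ncard_copySetAvoiding_mono hU' (hr.invariant hd).supp (le_attachStep _ _ _) x)⟩

/-- Completing a partial copy with pending trees to a state with one more vertex. -/
theorem PartialCopy.exists_growState [DecidableEq V] {h : ℕ} {I : Set (V × ℕ × Finset ℕ)}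
    {X : Finset ℕ}
    (hU : U.Connected) (he : U.edgeSet.ncard = Fintype.card V) (hcomp : UnicyclicComplete U d)
    (hd : 2 * m < d) (hs : PartialCopy m g U h D φ I X) (hh : Fintype.card V ≤ h)
    (hD : 2 * D.card ≤ innerDegSum U D) (hg : UAReachable m d n g)
    (hF : TreeFamily m d n g (Fintype.card V) K F) (hx : x ∈ D.image φ)
    (hj : j ≤ (copySetAvoiding g U x).ncard) :
    ∃ D' φ', D ⊆ D' ∧ GrowState m d n K j U g D' φ' x F := by
  have hinv := hg.invariant hd
  obtain ⟨D', φ', hDD, hφ, hcore, hs'⟩ := hs.eliminate hU he hcomp hinv.supp.finite_neighborSet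
    hinv.deg_le ((Finset.card_le_univ _).trans hh) hD
  refine ⟨D', φ', hDD, hg, hF, hs', hcore, ?_, hj⟩
  obtain ⟨u, hu, rfl⟩ := Finset.mem_image.1 hx
  exact Finset.mem_image.2 ⟨u, hDD hu, hφ u hu⟩

theorem GrowState.step_good [DecidableEq V] (hU : U.Connected)
    (he : U.edgeSet.ncard = Fintype.card V)
    (hU' : ∀ u, ∃ v, U.Adj u v) (hcomp : UnicyclicComplete U d) (hd : 2 * m < d)
    (hs : GrowState m d n K j U g D φ x F) {b v : V} (hb : b ∈ D) (hv : v ∉ D) (hbv : U.Adj b v)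
    {S : Finset ℕ} (hS : S ⊆ lowDegSet d g n) (hc : S.card = m) {J : Finset (ℕ × Finset ℕ)}
    (hJ : J ⊆ F) (hJD : ∀ p ∈ J, Disjoint p.2 (D.image φ))
    (hSJ : S = {φ b} ∪ J.image Prod.fst) :
    ∃ D' φ', insert v D ⊆ D' ∧ GrowState m d (n + 1) K j U (attachStep g (n + 1) S) D' φ' x
      (F.filter (fun p => Disjoint p.2 S)) := by
  have hg := (hs.reach.invariant hd).supp
  have hr := hs.reach.attach hd hS hc
  obtain ⟨I', hI'⟩ := (hs.copy.closed_restrict (Fintype.card V)).attach (v := v) (A := {b}) (S := S)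
    hg (hs.copy.image_subset_Icc hU he hg hs.core) (hs.family.mono hJ) hJD hv
    (fun u => by
      rw [Finset.mem_singleton]
      refine ⟨?_, fun hu => eq_of_adj_of_innerDegSum hU he hs.core hv hb hu.1 hbv.symm hu.2⟩
      rintro rfl
      exact ⟨hb, hbv.symm⟩)
    (by rw [hSJ, Finset.image_singleton])
  refine hI'.exists_growState hU he hcomp hd le_rfl
    (two_mul_card_insert_le hs.core hv hb hbv.symm) hr (hs.family.attachStep S) ?_
    (hs.count.trans (ncard_copySetAvoiding_mono hU' (hr.invariant hd).supp (le_attachStep _ _ _) x))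
  obtain ⟨u, hu, rfl⟩ := Finset.mem_image.1 hs.mem
  exact Finset.mem_image.2 ⟨u, Finset.mem_insert_of_mem hu,
    Function.update_of_ne (ne_of_mem_of_not_mem hu hv) _ _⟩

open Classical in
theorem GrowState.exists_le_hitValue (hm : 1 ≤ m) (hU : U.Connected)
    (he : U.edgeSet.ncard = Fintype.card V)
    (hU' : ∀ u, ∃ v, U.Adj u v) (hcomp : UnicyclicComplete U d) (hd : 2 * m < d) (K j q : ℕ)
    {c : ℝ} (hc : 0 < c) :
    ∃ ε : ℝ, 0 < ε ∧ ∃ N : ℕ, ∀ n, N ≤ n → ∀ g D φ x F, GrowState m d n K j U g D φ x F →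
      Dᶜ.card ≤ q → c * n ≤ F.card →
      ε ≤ hitValue m d (fun g => j + 1 ≤ (copySet g U).ncard) n g := by
  have hZ := persistent_le_ncard_copySet hU' hd (j + 1)
  have huniv : ∀ n g D φ x F, GrowState m d n K j U g D φ x F → Dᶜ.card = 0 →
      1 ≤ hitValue m d (fun g => j + 1 ≤ (copySet g U).ncard) n g := by
    intro n g D φ x F hs hD
    rw [hitValue_of_mem hd hZ hs.reach]
    have hD' : D = Finset.univ := by simpa using hD
    subst hD'
    obtain ⟨b, -, rfl⟩ := Finset.mem_image.1 hs.mem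
    have := hs.copy.ncard_avoiding_lt hU' (hs.reach.invariant hd).supp b
    have := hs.count
    omega
  induction q generalizing c with
  | zero =>
    exact ⟨1, one_pos, 0, fun n _ g D φ x F hs hD _ => huniv n g D φ x F hs (by omega)⟩
  | succ q ih =>
    obtain ⟨ε, hε, N₁, hN₁⟩ := ih (c := c / 16) (by positivity)
    obtain ⟨p, hp, N₂, hN₂⟩ := choose_ratio_lower (c / 8) (by positivity) (m - 1)
    obtain ⟨N₃, hN₃⟩ := exists_nat_ge (8 * (Fintype.card V + m) / c)
    obtain ⟨ε', hε', N', hN'⟩ := exists_le_hitValue_of_race (b := Fintype.card V * (m * d)) hm hd hZ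
      hc hp (by positivity) hε (max (max N₁ N₂) (max N₃ 1))
    refine ⟨min 1 ε', by positivity, N', fun n hn g D φ x F hs hD hF => ?_⟩
    by_cases hDu : Dᶜ.card = 0
    · exact (min_le_left _ _).trans (huniv n g D φ x F hs hDu)
    refine (min_le_right _ _).trans ?_
    obtain ⟨b, hb, v, hv, hbv⟩ := exists_adj_of_connected hU
      (D := D) (by obtain ⟨u, hu, -⟩ := Finset.mem_image.1 hs.mem; exact ⟨u, hu⟩)
      (by rintro rfl; simp at hDu)
    refine hN' (fun n g r => ∃ F, GrowState m d n K j U g D φ x F ∧ F.card = r) ?_ n hn g F.card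
      hs.reach ⟨F, hs, rfl⟩ hF
    clear hs hF hn
    rintro n hn g _ hg ⟨F, hs, rfl⟩ hF
    simp only [max_le_iff] at hn
    obtain ⟨⟨hn1, hn2⟩, hn3, hn4⟩ := hn
    have hinv := hg.invariant hd
    have hn' : (1 : ℝ) ≤ n := by exact_mod_cast hn4
    have hbig : ((Fintype.card V : ℝ) + m) ≤ c / 8 * n := by
      have : (N₃ : ℝ) ≤ n := by exact_mod_cast hn3
      have := hN₃.trans this
      rw [div_le_iff₀ hc] at this
      linarith
    have hXcard : (D.image φ).card ≤ Fintype.card V :=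
      Finset.card_image_le.trans (Finset.card_le_univ _)
    set F' := F.filter (fun p => Disjoint p.2 (D.image φ)) with hF'
    have hF'F : F' ⊆ F := Finset.filter_subset _ _
    have hF'c : c / 8 * n ≤ F'.card := by
      have h1 : (F.card : ℝ) ≤ F'.card + Fintype.card V := by
        exact_mod_cast (hs.family.card_le_card_filter_disjoint_add (D.image φ)).trans
          (by gcongr)
      linarith [Nat.cast_nonneg (α := ℝ) m]
    have hbF : ∀ p ∈ F', p.1 ∉ ({φ b} : Finset ℕ) := by
      intro p hp hpb
      rw [Finset.mem_singleton] at hpb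
      refine Finset.disjoint_left.1 (Finset.mem_filter.1 hp).2
        (hs.family.root_mem (hF'F hp)) ?_
      rw [hpb]
      exact Finset.mem_image_of_mem _ hb
    have hlow := hs.copy.mem_lowDegSet_of_adj hU he hcomp hinv.supp hs.core hb hv hbv
    obtain ⟨good, hgood⟩ : ∃ good : Finset ℕ → Prop, ∀ S, good S ↔
        ∃ J ⊆ F', S = {φ b} ∪ J.image Prod.fst := ⟨_, fun _ => Iff.rfl⟩
    obtain ⟨bad, hbad⟩ : ∃ bad : Finset ℕ → Prop, ∀ S, bad S ↔ ¬ Disjoint (D.image φ) S :=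
      ⟨_, fun _ => Iff.rfl⟩
    refine ⟨good, bad, ?_, ?_, fun S hS hSc => ⟨fun hgS => ?_, fun hbS => ?_⟩⟩
    · have := le_stepAvg_indicator (a := p) hd hinv good (i := m - 1) (by omega) (by omega)
        ((F'.powersetCard (m - 1)).image (fun J => {φ b} ∪ J.image Prod.fst)) ?_ ?_
      · rwa [show m - (m - 1) = 1 by omega, pow_one] at this
      · intro S hS
        obtain ⟨J, hJ, rfl⟩ := Finset.mem_image.1 hS
        obtain ⟨hJF, hJc⟩ := Finset.mem_powersetCard.1 hJ
        refine ⟨Finset.union_subset (by simpa using hlow)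
          (hs.family.mono (hJF.trans hF'F)).image_subset_lowDegSet, ?_, (hgood _).2 ⟨J, hJF, rfl⟩⟩
        rw [(hs.family.mono hF'F).card_union_image hJF hbF, hJc, Finset.card_singleton]
        omega
      · rw [Finset.card_image_of_injOn, Finset.card_powersetCard]
        · exact hN₂ n hn2 _ hF'c
        · intro J hJ J' hJ' hJJ
          have h1 := (hs.family.mono hF'F).eq_filter_of_image (Finset.mem_powersetCard.1 hJ).1 hbF
          have h2 := (hs.family.mono hF'F).eq_filter_of_image (Finset.mem_powersetCard.1 hJ').1 hbF
          rw [← h1, ← h2]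
          simp only at hJJ
          rw [hJJ]
    · calc _ ≤ stepAvg m d n g (fun S => ∑ x ∈ D.image φ, if x ∈ S then 1 else 0) := by
            refine stepAvg_mono fun S _ _ => ?_
            have := one_sub_le_indicator_disjoint (D.image φ) S
            by_cases h : Disjoint (D.image φ) S
            · rw [if_neg (by simpa [hbad] using h)]
              exact Finset.sum_nonneg fun _ _ => by split_ifs <;> norm_num
            · rw [if_pos ((hbad S).2 h)]
              rw [if_neg h] at this
              linarith
        _ ≤ (D.image φ).card * (m * d / n) := stepAvg_hits_le hm hd hinv _
        _ ≤ Fintype.card V * (m * d / n) :=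
            mul_le_mul_of_nonneg_right (by exact_mod_cast hXcard) (by positivity)
        _ = _ := by ring
    · obtain ⟨J, hJF, hSJ⟩ := (hgood S).1 hgS
      obtain ⟨D', φ', hDD, hs'⟩ := hs.step_good hU he hU' hcomp hd hb hv hbv hS hSc
        (hJF.trans hF'F) (fun p hp => (Finset.mem_filter.1 (hJF hp)).2) hSJ
      refine hN₁ (n + 1) (by omega) _ D' φ' x _ hs' ?_ ?_
      · have h1 : D'ᶜ.card ≤ (insert v D)ᶜ.card :=
          Finset.card_le_card (Finset.compl_subset_compl.2 hDD)
        have h2 : (insert v D)ᶜ.card < Dᶜ.card := by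
          refine Finset.card_lt_card ⟨Finset.compl_subset_compl.2 (Finset.subset_insert _ _), ?_⟩
          intro hsub
          have := hsub (Finset.mem_compl.2 hv)
          simp at this
        omega
      · have h1 := hs.family.card_le_card_filter_disjoint_add S
        rw [hSc] at h1
        have h2 : (F.card : ℝ) ≤ (F.filter (fun p => Disjoint p.2 S)).card + m := by
          exact_mod_cast h1
        push_cast
        have h3 : c / 16 * ((n : ℝ) + 1) ≤ c / 16 * (2 * n) := by gcongr; linarith
        linarith [Nat.cast_nonneg (α := ℝ) (Fintype.card V)]
    · rw [hbad, not_not] at hbS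
      refine ⟨_, ?_, _, hs.step hU he hU' hd hS hSc hbS.symm, rfl⟩
      have h1 := hs.family.card_le_card_filter_disjoint_add S
      rwa [hSc] at h1

end Growth

section Closing

variable {V : Type*} [Fintype V] {m d n K j : ℕ} {U : SimpleGraph V} {g : SimpleGraph ℕ}
  {F : Finset (ℕ × Finset ℕ)} {e : ℕ} {c : ℕ → V}

/-- Joining the new vertex to both ends of a spine inside a tree closes the cycle of `U`. -/
theorem PartialCopy.exists_growState_of_spine (hU : U.Connected)
    (he : U.edgeSet.ncard = Fintype.card V) (hU' : ∀ u, ∃ v, U.Adj u v)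
    (hcomp : UnicyclicComplete U d) (hd : 2 * m < d) (hc : IsCycleEnum U (e + 2) c)
    (hg : UAReachable m d n g) (hF : TreeFamily m d n g (Fintype.card V) K F)
    (hj : j ≤ (copySet g U).ncard) {p : ℕ × Finset ℕ} (hp : p ∈ F) {φ : V → ℕ}
    {I : Set (V × ℕ × Finset ℕ)}
    (hs : PartialCopy m g U (Fintype.card V) (prefixSet c (e + 1)) φ I p.2)
    {J : Finset (ℕ × Finset ℕ)} (hJ : J ⊆ F) (hpJ : p ∉ J) {S : Finset ℕ}
    (hS : S ⊆ lowDegSet d g n) (hSc : S.card = m)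
    (hSJ : S = {φ (c 0), φ (c e)} ∪ J.image Prod.fst) :
    ∃ D φ', GrowState m d (n + 1) K j U (attachStep g (n + 1) S) D φ' (n + 1)
      (F.filter (fun p => Disjoint p.2 S)) := by
  classical
  have hinv := hg.invariant hd
  have hr := hg.attach hd hS hSc
  have hv : c (e + 1) ∉ prefixSet c (e + 1) := hc.notMem_prefixSet le_rfl (by omega)
  obtain ⟨I', hI'⟩ := hs.attach (v := c (e + 1)) (A := {c 0, c e}) (S := S) hinv.supp
    (hF.sub p hp) (hF.mono hJ) (fun q hq => hF.disj q (hJ hq) p hp (ne_of_mem_of_not_mem hq hpJ)) hv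
    (fun u => by
      rw [Finset.mem_insert, Finset.mem_singleton]
      constructor
      · rintro (rfl | rfl)
        · refine ⟨mem_prefixSet.2 ⟨0, by omega, rfl⟩, ?_⟩
          have := hc.adj (e + 1) (by omega)
          rwa [show e + 1 + 1 = e + 2 by rfl, hc.close] at this
        · exact ⟨mem_prefixSet.2 ⟨e, by omega, rfl⟩, (hc.adj e (by omega)).symm⟩
      · rintro ⟨hu, hadj⟩
        have hu' : u ∈ prefixSet c (e + 2) := by
          rw [prefixSet_succ]
          exact Finset.mem_insert_of_mem hu
        have := hc.eq_or_eq_of_adj hU he (by omega) hu' hadj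
        rwa [hc.close, or_comm] at this)
    (by rw [hSJ, Finset.image_insert, Finset.image_singleton])
  rw [← prefixSet_succ] at hI'
  obtain ⟨D, φ', -, hD⟩ := hI'.exists_growState (j := j) (x := n + 1) hU he hcomp hd le_rfl
    hc.two_mul_card_le hr (hF.attachStep S)
    (Finset.mem_image.2 ⟨c (e + 1), mem_prefixSet.2 ⟨e + 1, by omega, rfl⟩,
      Function.update_self _ _ _⟩)
    (hj.trans (ncard_copySet_le_avoiding hU' hinv.supp (hr.invariant hd).supp
      (le_attachStep _ _ _)))
  exact ⟨D, φ', hD⟩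

theorem exists_disjoint_halves {α : Type*} {F : Finset α} {a : ℝ}
    (hFc : a ≤ F.card) : ∃ F₁ ⊆ F, ∃ F₂ ⊆ F, Disjoint F₁ F₂ ∧ (a - 1) / 2 ≤ F₁.card ∧
      (a - 1) / 2 ≤ F₂.card := by
  classical
  obtain ⟨F₁, h1, h2⟩ := Finset.exists_subset_card_eq (show F.card / 2 ≤ F.card by omega)
  have h3 := Finset.card_sdiff_of_subset h1
  have h4 : (F.card : ℝ) ≤ 2 * F₁.card + 1 := by exact_mod_cast (by omega)
  have h5 : (F.card : ℝ) ≤ 2 * (F \ F₁).card + 1 := by exact_mod_cast (by omega)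
  exact ⟨F₁, h1, F \ F₁, Finset.sdiff_subset, Finset.disjoint_sdiff, by linarith, by linarith⟩

/-- The sets formed by two marked points of one tree and the roots of other trees are determined
by their ingredients. -/
theorem TreeFamily.injOn_pair_union_image {h i : ℕ} (hF : TreeFamily m d n g h K F)
    {F₁ F₂ : Finset (ℕ × Finset ℕ)} (h₁ : F₁ ⊆ F) (h₂ : F₂ ⊆ F) (h₁₂ : Disjoint F₁ F₂)
    {z : ℕ × Finset ℕ → ℕ} (hz : ∀ p ∈ F, z p ∈ p.2) :
    Set.InjOn (fun q : (ℕ × Finset ℕ) × Finset (ℕ × Finset ℕ) =>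
      ({q.1.1, z q.1} ∪ q.2.image Prod.fst : Finset ℕ)) (F₁ ×ˢ F₂.powersetCard i : Finset _) := by
  have hA : ∀ p ∈ F₁, ∀ q ∈ F₂, q.1 ∉ ({p.1, z p} : Finset ℕ) := by
    intro p hp q hq hqp
    have hqp' : q.1 ∈ p.2 := by
      rw [Finset.mem_insert, Finset.mem_singleton] at hqp
      rcases hqp with h | h
      · exact h ▸ hF.root_mem (h₁ hp)
      · exact h ▸ hz p (h₁ hp)
    have := hF.eq_of_mem (h₂ hq) (h₁ hp) (hF.root_mem (h₂ hq)) hqp'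
    exact Finset.disjoint_left.1 h₁₂ hp (this ▸ hq)
  rintro ⟨p, J⟩ hq ⟨p', J'⟩ hq' heq
  rw [Finset.mem_coe, Finset.mem_product, Finset.mem_powersetCard] at hq hq'
  obtain ⟨hp, hJ, -⟩ := hq
  obtain ⟨hp', hJ', -⟩ := hq'
  simp only at hp hJ hp' hJ' heq
  have hJJ : J = J' := by
    rw [← (hF.mono h₂).eq_filter_of_image hJ (hA p hp),
      ← (hF.mono h₂).eq_filter_of_image hJ' (hA p' hp'), heq]
  have hpp : p = p' := by
    have hmem : p.1 ∈ ({p'.1, z p'} ∪ J'.image Prod.fst : Finset ℕ) := by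
      rw [← heq]
      simp
    rw [Finset.mem_union, Finset.mem_insert, Finset.mem_singleton, Finset.mem_image] at hmem
    have hroot := hF.root_mem (h₁ hp)
    rcases hmem with (h | h) | ⟨q, hq, h⟩
    · exact hF.eq_of_mem (h₁ hp) (h₁ hp') hroot (h ▸ hF.root_mem (h₁ hp'))
    · exact hF.eq_of_mem (h₁ hp) (h₁ hp') hroot (h ▸ hz p' (h₁ hp'))
    · have := hF.eq_of_mem (h₁ hp) (h₂ (hJ' hq)) hroot (h ▸ hF.root_mem (h₂ (hJ' hq)))
      exact absurd (this ▸ hJ' hq) (Finset.disjoint_left.1 h₁₂ hp)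
  rw [hpp, hJJ]

open Classical in
theorem familyBound_of_cycle (hm : 2 ≤ m) (hU : U.Connected)
    (he : U.edgeSet.ncard = Fintype.card V) (hU' : ∀ u, ∃ v, U.Adj u v)
    (hcomp : UnicyclicComplete U d) (hd : 2 * m < d) (hc : IsCycleEnum U (e + 2) c) (j K : ℕ) :
    FamilyBound m d (fun g => j + 1 ≤ (copySet g U).ncard) (fun g => j ≤ (copySet g U).ncard)
      (Fintype.card V + (e + 1)) K := by
  intro γ hγ
  have he1 : 1 ≤ e := by have := hc.three_le; omega
  have hm' : (2 : ℝ) ≤ m := by exact_mod_cast hm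
  obtain ⟨ε, hε, N₁, hN₁⟩ := GrowState.exists_le_hitValue (by omega) hU he hU' hcomp hd K j
    (Fintype.card V) (c := γ / 16) (by positivity)
  obtain ⟨a, ha, N₂, hN₂⟩ := choose_ratio_lower (γ / 16) (by positivity) (m - 2)
  obtain ⟨N₃, hN₃⟩ := exists_nat_ge (8 * m / γ)
  obtain ⟨ε', hε', N', hN'⟩ := exists_le_hitValue_of_race (b := 0) (by omega) hd
    (persistent_le_ncard_copySet hU' hd (j + 1)) hγ (p := γ / 16 * a) (by positivity) le_rfl hε
    (max (max N₁ N₂) (max N₃ 1))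
  refine ⟨ε', hε', N', fun n hn g hg hgj F hF hFc => ?_⟩
  refine hN' (fun n g r => j ≤ (copySet g U).ncard ∧ ∃ F,
    TreeFamily m d n g (Fintype.card V + (e + 1)) K F ∧ F.card = r) ?_ n hn g F.card hg
    ⟨hgj, F, hF, rfl⟩ hFc
  clear hFc hF hgj hg hn
  rintro n hn g _ hg ⟨hgj, F, hF, rfl⟩ hFc
  simp only [max_le_iff] at hn
  obtain ⟨⟨hn1, hn2⟩, hn3, hn4⟩ := hn
  have hinv := hg.invariant hd
  have hn' : (1 : ℝ) ≤ n := by exact_mod_cast hn4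
  have hbig : (m : ℝ) ≤ γ / 8 * n := by
    have : (N₃ : ℝ) ≤ n := by exact_mod_cast hn3
    have := hN₃.trans this
    rw [div_le_iff₀ hγ] at this
    linarith
  have hF' := hF.of_le (h' := Fintype.card V) (by omega)
  have hspine : ∀ p ∈ F, ∃ φ I, PartialCopy m g U (Fintype.card V) (prefixSet c (e + 1)) φ I p.2 ∧
      φ (c 0) = p.1 ∧ graphDeg g (φ (c e)) ≤ m + 1 := by
    intro p hp
    obtain ⟨φ, I, h1, h2, -, h3⟩ := PartialCopy.exists_spine (by omega) hU he hc e (by omega)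
      (hF.tree p hp)
    exact ⟨φ, I, h1, h2, h3⟩
  choose! φ I hcopy hroot hdeg using hspine
  have hce : ∀ i < e + 1, c i ∈ prefixSet c (e + 1) := fun i hi => mem_prefixSet.2 ⟨i, hi, rfl⟩
  have hz : ∀ p ∈ F, φ p (c e) ∈ p.2 := fun p hp => (hcopy p hp).maps _ (hce e (by omega))
  have hne : ∀ p ∈ F, p.1 ≠ φ p (c e) := by
    intro p hp heq
    rw [← hroot p hp] at heq
    have := hc.inj 0 (by omega) e (by omega)
      ((hcopy p hp).inj (hce 0 (by omega)) (hce e (by omega)) heq)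
    omega
  obtain ⟨F₁, hF₁, F₂, hF₂, hF₁₂, hc₁, hc₂⟩ := exists_disjoint_halves hFc
  obtain ⟨good, hgood⟩ : ∃ good : Finset ℕ → Prop, ∀ S, good S ↔ ∃ p ∈ F, ∃ J ⊆ F, p ∉ J ∧
      S = {p.1, φ p (c e)} ∪ J.image Prod.fst := ⟨_, fun _ => Iff.rfl⟩
  refine ⟨good, fun _ => False, ?_, by simp [stepAvg], fun S hS hSc => ⟨fun hgS => ?_, fun _ => ?_⟩⟩
  · have := le_stepAvg_indicator (a := γ / 16 * a) hd hinv good (i := m - 1) (by omega) (by omega)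
      ((F₁ ×ˢ F₂.powersetCard (m - 2)).image (fun q : (ℕ × Finset ℕ) × Finset (ℕ × Finset ℕ) =>
        ({q.1.1, φ q.1 (c e)} ∪ q.2.image Prod.fst : Finset ℕ))) ?_ ?_
    · rwa [show m - (m - 1) = 1 by omega, pow_one] at this
    · intro S hS
      obtain ⟨⟨p, J⟩, hpJ, rfl⟩ := Finset.mem_image.1 hS
      rw [Finset.mem_product, Finset.mem_powersetCard] at hpJ
      obtain ⟨hp, hJ, hJc⟩ := hpJ
      simp only at hp hJ hJc ⊢
      have hp' := hF₁ hp
      have hJF := hJ.trans hF₂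
      have hpJ : p ∉ J := fun h => Finset.disjoint_left.1 hF₁₂ hp (hJ h)
      refine ⟨?_, ?_, (hgood _).2 ⟨p, hp', J, hJF, hpJ, rfl⟩⟩
      · refine Finset.union_subset ?_ (hF.mono hJF).image_subset_lowDegSet
        rw [Finset.insert_subset_iff, Finset.singleton_subset_iff]
        have := hdeg p hp'
        exact ⟨hF.low p hp', mem_lowDegSet.2 ⟨hF.sub p hp' (hz p hp'), by omega⟩⟩
      · rw [(hF.mono hJF).card_union_image subset_rfl, Finset.card_pair (hne p hp'), hJc]
        · omega
        · intro q hq hqp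
          rw [Finset.mem_insert, Finset.mem_singleton] at hqp
          refine ne_of_mem_of_not_mem hq hpJ (hF.eq_of_mem (hJF hq) hp' (hF.root_mem (hJF hq)) ?_)
          rcases hqp with h | h
          · exact h ▸ hF.root_mem hp'
          · exact h ▸ hz p hp'
    · rw [Finset.card_image_of_injOn (hF.injOn_pair_union_image hF₁ hF₂ hF₁₂ hz),
        Finset.card_product, Finset.card_powersetCard, Nat.cast_mul,
        show m - 1 = (m - 2) + 1 by omega, pow_succ]
      have h1 : γ / 16 * n ≤ F₁.card := by linarith
      have h2 := hN₂ n hn2 F₂.card (by linarith)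
      calc γ / 16 * a * ((n : ℝ) ^ (m - 2) * n) = γ / 16 * n * (a * (n : ℝ) ^ (m - 2)) := by ring
        _ ≤ _ := mul_le_mul h1 h2 (by positivity) (by positivity)
  · obtain ⟨p, hp, J, hJ, hpJ, hSJ⟩ := (hgood S).1 hgS
    obtain ⟨D, φ', hs⟩ := (hcopy p hp).exists_growState_of_spine hU he hU' hcomp hd hc hg hF' hgj hp
      hJ hpJ hS hSc (by rw [hSJ, hroot p hp])
    refine hN₁ (n + 1) (by omega) _ D φ' _ _ hs (Finset.card_le_univ _) ?_
    have h1 := hF.card_le_card_filter_disjoint_add S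
    rw [hSc] at h1
    have h2 : (F.card : ℝ) ≤ (F.filter (fun p => Disjoint p.2 S)).card + m := by
      exact_mod_cast h1
    push_cast
    have h3 : γ / 16 * ((n : ℝ) + 1) ≤ γ / 16 * (2 * n) := by gcongr; linarith
    linarith
  · refine ⟨_, ?_, persistent_le_ncard_copySet hU' hd j n g S hg hS hSc hgj, _,
      hF.attachStep S, rfl⟩
    have h1 := hF.card_le_card_filter_disjoint_add S
    rwa [hSc] at h1

end Closing

open Classical in
theorem tendsto_lawSum_le_ncard_copySet {V : Type*} [Fintype V] {m d ℓ : ℕ} {U : SimpleGraph V}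
    {Ω : Type*} [MeasurableSpace Ω] {μ : Measure Ω} [IsProbabilityMeasure μ]
    {G : ℕ → Ω → SimpleGraph ℕ} (hm : 2 ≤ m) (hd : 2 * m < d) (hG : IsUAProcess m d μ G)
    (hU : U.Connected) (he : U.edgeSet.ncard = Fintype.card V) (hU' : ∀ u, ∃ v, U.Adj u v)
    (hcomp : UnicyclicComplete U d) {c : ℕ → V} (hc : IsCycleEnum U ℓ c) (j : ℕ) :
    Tendsto (fun n => lawSum m d μ G n (fun g => if j ≤ (copySet g U).ncard then 1 else 0)) atTop
      (𝓝 1) := by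
  obtain ⟨e, rfl⟩ : ∃ e, ℓ = e + 2 := ⟨ℓ - 2, by have := hc.three_le; omega⟩
  induction j with
  | zero =>
    refine tendsto_const_nhds.congr' ?_
    filter_upwards [eventually_ge_atTop m] with n hn
    simpa using (lawSum_one hd hG hn).symm
  | succ j ih =>
    have hZ := persistent_le_ncard_copySet hU' hd j
    have hZ' := persistent_le_ncard_copySet hU' hd (j + 1)
    obtain ⟨ε, hε, N, hN⟩ := (familyBound_zero_of_forall (by omega) hd hZ' hZ _
      (familyBound_of_cycle hm hU he hU' hcomp hd hc j) 1).exists_le_hitValue hd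
    have h := tendsto_lawSum_of_hitValue hd hG hZ' (by convert ih) hε hN
    convert h

/-- In the bounded-degree uniform attachment process with `m ≥ 2`, if `U₀` is the complete
max-admissible unicyclic graph of depth `k` containing an `ℓ`-cycle (all of whose non-leaf
vertices have degree `d`), then for every `n₀`, `P(N_{U₀}(n) > n₀) → 1` as `n → ∞`. -/
theorem uniform_attachment_complete_unicyclic_count
    (m d : ℕ) (hm : 2 ≤ m) (hd : 2 * m < d)
    {Ω : Type*} [MeasurableSpace Ω] (μ : Measure Ω) [IsProbabilityMeasure μ]
    (G : ℕ → Ω → SimpleGraph ℕ) (hG : IsUAProcess m d μ G)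
    (ℓ k : ℕ) {t : ℕ} (U₀ : SimpleGraph (Fin t))
    (hU₀ : IsUnicyclic U₀) (hcyc : HasCycleOfLength U₀ ℓ) (hdepth : UnicyclicDepth U₀ k)
    (hcompl : UnicyclicComplete U₀ d) (hadm : MaxAdmissibleUnicyclic m d U₀)
    (n₀ : ℕ) :
    Tendsto (fun n : ℕ => μ {ω | n₀ < unicyclicCount (G n ω) U₀}) atTop (𝓝 1) := by
  classical
  obtain ⟨c, hc⟩ := hcyc.exists_enum
  have hU' : ∀ u, ∃ v, U₀.Adj u v := by
    intro u
    obtain ⟨b, hb, v, -, hbv⟩ := exists_adj_of_connected hU₀.1 (Finset.singleton_nonempty u) (by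
      intro h
      have h0 := h ▸ Finset.mem_univ (c 0)
      have h1 := h ▸ Finset.mem_univ (c 1)
      rw [Finset.mem_singleton] at h0 h1
      have := hc.three_le
      have := hc.inj 0 (by omega) 1 (by omega) (h0.trans h1.symm)
      omega)
    exact ⟨v, Finset.mem_singleton.1 hb ▸ hbv⟩
  have key := tendsto_lawSum_le_ncard_copySet hm hd hG hU₀.1 (by simpa using hU₀.2) hU' hcompl hc
    (n₀ + 1)
  have key' := ENNReal.tendsto_ofReal key
  rw [ENNReal.ofReal_one] at key'
  refine tendsto_of_tendsto_of_tendsto_of_le_of_le key' tendsto_const_nhds (fun n => ?_)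
    fun n => prob_le_one
  refine le_trans (ENNReal.ofReal_le_ofReal ?_)
    (lawSum_indicator_le hG n (fun g => n₀ < unicyclicCount g U₀))
  refine lawSum_mono fun g hg => ?_
  have hinv := hg.invariant hd
  have hle := ncard_copySet_le_unicyclicCount hU₀ hcompl hU' hinv.supp hinv.deg_le
  split_ifs <;> first | omega | norm_num
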